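/- arXiv:2510.15814 — 2 statements merged into one kernel-verified Lean document; each statement's English description precedes it below -/
import Mathlib

section
/- Let G be a finite group, let V_0, …, V_d be permutation representations of G, and let M_i ⊆ Aff_G(V_{i-1}, V_i) be layer spaces for i = 1, …, d. Let I := Aff_G(V_d, ℝ) be the invariant layer space (ℝ carrying the trivial G-action) and L := Aff(ℝ, ℝ). Assume the activation σ : ℝ → ℝ is continuous and not a polynomial, and set ρ = ρ(U(M_1, …, M_d, I)). Then U(M_1, …, M_d, I, L) = C_ρ(V_0, ℝ); that is, the universality class of these invariant networks with a fully connected readout layer equals the class of all continuous real-valued functions on V_0 respecting the separation relation ρ. -/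
open scoped BigOperators

noncomputable section EquivUnivPreamble

/-- Point-wise activation: apply `σ` coordinatewise. -/
def act (σ : ℝ → ℝ) {Z : Type} (v : Z → ℝ) : Z → ℝ := fun z => σ (v z)

/-- The action of a group element `g` on a real-valued function `v : Y → ℝ` induced by a
`G`-action on `Y` (the permutation representation `ℝ^Y`): `(g • v) y = v (g⁻¹ • y)`. -/
def pSMul {G Y : Type} [Group G] [MulAction G Y] (g : G) (v : Y → ℝ) : Y → ℝ :=
  fun y => v (g⁻¹ • y)

/-- `G`-equivariance of a map between permutation representations. -/
def Equivariant (G : Type) [Group G] {Y Z : Type} [MulAction G Y] [MulAction G Z]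
    (f : (Y → ℝ) → (Z → ℝ)) : Prop :=
  ∀ (g : G) (v : Y → ℝ), f (pSMul g v) = pSMul g (f v)

/-- A map between permutation representations is affine. -/
def IsAffine {Y Z : Type} (f : (Y → ℝ) → (Z → ℝ)) : Prop :=
  ∃ (φ : (Y → ℝ) →ₗ[ℝ] (Z → ℝ)) (b : Z → ℝ), ∀ v, f v = φ v + b

/-- A layer space: the set of maps `v ↦ ∑ᵢ cᵢ φⁱ(v) + b` where `φ¹, …, φᵏ` are fixed
`G`-equivariant linear maps and the bias `b` ranges over all functions constant on
`G`-orbits (i.e. all `∑ⱼ yⱼ 1_{Xⱼ}` with `Xⱼ` the orbits). -/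
def IsLayerSpace (G : Type) [Group G] {Y Z : Type} [MulAction G Y] [MulAction G Z]
    (M : Set ((Y → ℝ) → (Z → ℝ))) : Prop :=
  ∃ (k : ℕ) (φ : Fin k → ((Y → ℝ) →ₗ[ℝ] (Z → ℝ))),
    (∀ i, Equivariant G (φ i : (Y → ℝ) → (Z → ℝ))) ∧
    M = { f | ∃ (c : Fin k → ℝ) (b : Z → ℝ),
            (∀ (g : G) (z : Z), b (g • z) = b z) ∧
            ∀ v, f v = (∑ i, c i • φ i v) + b }

/-- `M^{k×h}`: the layer space `M` with input multiplicity `k` and output multiplicity `h`,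
`(v₁,…,v_k) ↦ (∑ⱼ f_{1,j}(vⱼ), …, ∑ⱼ f_{h,j}(vⱼ))`, identifying `V ⊗ ℝᵏ` with
`Fin k × Y → ℝ`. -/
def layerPow {Y Z : Type} (M : Set ((Y → ℝ) → (Z → ℝ))) (k h : ℕ) :
    Set ((Fin k × Y → ℝ) → (Fin h × Z → ℝ)) :=
  { F | ∃ f : Fin h → Fin k → ((Y → ℝ) → (Z → ℝ)),
      (∀ i j, f i j ∈ M) ∧
      ∀ (v : Fin k × Y → ℝ) (p : Fin h × Z), F v p = ∑ j, f p.1 j (fun y => v (j, y)) p.2 }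

/-- `M^{1×h}` under the canonical identification `V ⊗ ℝ¹ ≅ V` of the input. -/
def layerPowIn {Y Z : Type} (M : Set ((Y → ℝ) → (Z → ℝ))) (h : ℕ) :
    Set ((Y → ℝ) → (Fin h × Z → ℝ)) :=
  { F | ∃ f : Fin h → ((Y → ℝ) → (Z → ℝ)), (∀ i, f i ∈ M) ∧
      ∀ (v : Y → ℝ) (p : Fin h × Z), F v p = f p.1 v p.2 }

/-- `M^{k×1}` under the canonical identification `W ⊗ ℝ¹ ≅ W` of the output. -/
def layerPowOut {Y Z : Type} (M : Set ((Y → ℝ) → (Z → ℝ))) (k : ℕ) :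
    Set ((Fin k × Y → ℝ) → (Z → ℝ)) :=
  { F | ∃ f : Fin k → ((Y → ℝ) → (Z → ℝ)), (∀ j, f j ∈ M) ∧
      ∀ (v : Fin k × Y → ℝ) (z : Z), F v z = ∑ j, f j (fun y => v (j, y)) z }

/-- Evaluation of a chain of `d+1` layers with the point-wise activation `σ` between
consecutive layers: `φ_d ∘ σ̃ ∘ ⋯ ∘ σ̃ ∘ φ_0`. -/
def chainEval (σ : ℝ → ℝ) : ∀ (d : ℕ) (Y : Fin (d + 2) → Type)
    (φ : ∀ i : Fin (d + 1), (Y i.castSucc → ℝ) → (Y i.succ → ℝ)),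
    (Y 0 → ℝ) → (Y (Fin.last (d + 1)) → ℝ)
  | 0, _, φ => φ 0
  | (d + 1), Y, φ => fun v =>
      φ (Fin.last (d + 1))
        (act σ (chainEval σ d (fun i : Fin (d + 2) => Y i.castSucc)
          (fun i : Fin (d + 1) => φ i.castSucc) v))

/-- The neural space `N(M₀, …, M_d)` of a chain of `d+1` layer spaces. -/
def NeuralSpace (σ : ℝ → ℝ) (d : ℕ) (Y : Fin (d + 2) → Type)
    (M : ∀ i : Fin (d + 1), Set ((Y i.castSucc → ℝ) → (Y i.succ → ℝ))) :
    Set ((Y 0 → ℝ) → (Y (Fin.last (d + 1)) → ℝ)) :=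
  { F | ∃ φ : ∀ i : Fin (d + 1), (Y i.castSucc → ℝ) → (Y i.succ → ℝ),
      (∀ i, φ i ∈ M i) ∧ F = chainEval σ d Y φ }

/-- All networks `N(M₀^{1×k₁}, M₁^{k₁×k₂}, …, M_d^{k_d×k})` for the chain `M₀,…,M_d`, with
arbitrary interior multiplicities and fixed output multiplicity `k` (union over the interior
multiplicities). -/
def WPre (σ : ℝ → ℝ) : ∀ (d : ℕ) (Y : Fin (d + 2) → Type)
    (M : ∀ i : Fin (d + 1), Set ((Y i.castSucc → ℝ) → (Y i.succ → ℝ))) (k : ℕ),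
    Set ((Y 0 → ℝ) → (Fin k × Y (Fin.last (d + 1)) → ℝ))
  | 0, _, M, k => layerPowIn (M 0) k
  | (d + 1), Y, M, k =>
      { F | ∃ (k' : ℕ) (g : (Y 0 → ℝ) → (Fin k' × Y (Fin.last (d + 1)).castSucc → ℝ)),
          g ∈ WPre σ d (fun i : Fin (d + 2) => Y i.castSucc)
                (fun i : Fin (d + 1) => M i.castSucc) k' ∧
          ∃ f ∈ layerPow (M (Fin.last (d + 1))) k' k,
          F = fun v => f (act σ (g v)) }

/-- The network space `N(M₀^{1×k}, M₁^{k×k}, …, M_d^{k×k})`: all multiplicities equal to `k`. -/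
def WFix (σ : ℝ → ℝ) : ∀ (d : ℕ) (Y : Fin (d + 2) → Type)
    (M : ∀ i : Fin (d + 1), Set ((Y i.castSucc → ℝ) → (Y i.succ → ℝ))) (k : ℕ),
    Set ((Y 0 → ℝ) → (Fin k × Y (Fin.last (d + 1)) → ℝ))
  | 0, _, M, k => layerPowIn (M 0) k
  | (d + 1), Y, M, k =>
      { F | ∃ g ∈ WFix σ d (fun i : Fin (d + 2) => Y i.castSucc)
                (fun i : Fin (d + 1) => M i.castSucc) k,
          ∃ f ∈ layerPow (M (Fin.last (d + 1))) k k,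
          F = fun v => f (act σ (g v)) }

/-- Closure in the topology of uniform convergence on compact sets. -/
def UnifClosure {A B : Type} [TopologicalSpace A] [PseudoMetricSpace B]
    (S : Set (A → B)) : Set (A → B) :=
  { F | ∀ K : Set A, IsCompact K → ∀ ε : ℝ, 0 < ε → ∃ g ∈ S, ∀ x ∈ K, dist (F x) (g x) < ε }

/-- Separation relation of a family of functions. -/
def sepRel {A B : Type} (S : Set (A → B)) : Set (A × A) :=
  { p | ∀ f ∈ S, f p.1 = f p.2 }

/-- Entry-wise separation relation at the output entry `z`. -/
def sepRelAt {A Z : Type} (S : Set (A → (Z → ℝ))) (z : Z) : Set (A × A) :=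
  { p | ∀ f ∈ S, f p.1 z = f p.2 z }

/-- `C_ρ(A, B)`: continuous functions respecting the relation `ρ`. -/
def Crho {A B : Type} [TopologicalSpace A] [TopologicalSpace B] (ρ : Set (A × A)) :
    Set (A → B) :=
  { f | Continuous f ∧ ∀ p ∈ ρ, f p.1 = f p.2 }

/-- `C_ρ̄(A, ℝ^Z)` for a family of entry-wise relations `ρ̄ = (ρ_z)_{z ∈ Z}`. -/
def CrhoEntryRel {A Z : Type} [TopologicalSpace A] (ρ : Z → Set (A × A)) :
    Set (A → (Z → ℝ)) :=
  { f | Continuous f ∧ ∀ (z : Z), ∀ p ∈ ρ z, f p.1 z = f p.2 z }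

/-- `σ` is not a polynomial function. -/
def NotPolynomial (σ : ℝ → ℝ) : Prop :=
  ¬ ∃ p : Polynomial ℝ, ∀ x : ℝ, σ x = Polynomial.eval x p

/-- `c+1` widened copies of the layer space `M ⊆ Aff_G(ℝ^Z, ℝ^Z)`, from input multiplicity
`kin` to output multiplicity `kout` (union over interior multiplicities). -/
def WRep (σ : ℝ → ℝ) {Z : Type} (M : Set ((Z → ℝ) → (Z → ℝ))) :
    ∀ (_c kin kout : ℕ), Set ((Fin kin × Z → ℝ) → (Fin kout × Z → ℝ))
  | 0, kin, kout => layerPow M kin kout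
  | (c + 1), kin, kout =>
      { F | ∃ k, ∃ g ∈ WRep σ M c kin k, ∃ f ∈ layerPow M k kout,
          F = fun v => f (act σ (g v)) }

/-- `c+1` widened copies of `M`, starting at input multiplicity `kin` and ending with
output multiplicity `1` (canonically identified with `ℝ^Z`). -/
def WRepOut (σ : ℝ → ℝ) {Z : Type} (M : Set ((Z → ℝ) → (Z → ℝ))) :
    ∀ (_c kin : ℕ), Set ((Fin kin × Z → ℝ) → (Z → ℝ))
  | 0, kin => layerPowOut M kin
  | (c + 1), kin =>
      { F | ∃ k, ∃ g ∈ WRep σ M c kin k, ∃ f ∈ layerPowOut M k,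
          F = fun v => f (act σ (g v)) }

/-- `c+1` widened copies of `M`, with input multiplicity `1` (identified with `ℝ^Z`) and
output multiplicity `k`. -/
def WRepIn (σ : ℝ → ℝ) {Z : Type} (M : Set ((Z → ℝ) → (Z → ℝ))) :
    ∀ (_c k : ℕ), Set ((Z → ℝ) → (Fin k × Z → ℝ))
  | 0, k => layerPowIn M k
  | (c + 1), k =>
      { F | ∃ k', ∃ g ∈ WRepIn σ M c k', ∃ f ∈ layerPow M k' k,
          F = fun v => f (act σ (g v)) }

/-- The universality class `U(M, …, M)` of `c+2` copies of a layer space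
`M ⊆ Aff_G(ℝ^Z, ℝ^Z)`. -/
def UClassRep (σ : ℝ → ℝ) {Z : Type} [Fintype Z] (M : Set ((Z → ℝ) → (Z → ℝ))) (c : ℕ) :
    Set ((Z → ℝ) → (Z → ℝ)) :=
  UnifClosure { F | ∃ k, ∃ g ∈ WRepIn σ M c k, ∃ f ∈ layerPowOut M k,
      F = fun v => f (act σ (g v)) }

/-- The universality class `U(M₀, …, M_d, M, …, M)` of the chain `M₀, …, M_d` followed by
`c+1` copies of `M`. -/
def UClassPreRep (σ : ℝ → ℝ) (d : ℕ) (Y : Fin (d + 2) → Type)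
    [Fintype (Y (Fin.last (d + 1)))]
    (Mpre : ∀ i : Fin (d + 1), Set ((Y i.castSucc → ℝ) → (Y i.succ → ℝ)))
    (M : Set ((Y (Fin.last (d + 1)) → ℝ) → (Y (Fin.last (d + 1)) → ℝ))) (c : ℕ) :
    Set ((Y 0 → ℝ) → (Y (Fin.last (d + 1)) → ℝ)) :=
  UnifClosure { F | ∃ k, ∃ g ∈ WPre σ d Y Mpre k, ∃ f ∈ WRepOut σ M c k,
      F = fun v => f (act σ (g v)) }

/-- The universality class `U(M₀, …, M_d, N)` of the chain `M₀, …, M_d` followed by one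
extra layer space `N`. -/
def UClassApp1 (σ : ℝ → ℝ) (d : ℕ) (Y : Fin (d + 2) → Type)
    (M : ∀ i : Fin (d + 1), Set ((Y i.castSucc → ℝ) → (Y i.succ → ℝ)))
    {Z : Type} [Fintype Z]
    (N : Set ((Y (Fin.last (d + 1)) → ℝ) → (Z → ℝ))) : Set ((Y 0 → ℝ) → (Z → ℝ)) :=
  UnifClosure { F | ∃ k, ∃ g ∈ WPre σ d Y M k, ∃ f ∈ layerPowOut N k,
      F = fun v => f (act σ (g v)) }

/-- The universality class `U(M₀, …, M_d, N₁, N₂)` of the chain `M₀, …, M_d` followed by two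
extra layer spaces `N₁, N₂`. -/
def UClassApp2 (σ : ℝ → ℝ) (d : ℕ) (Y : Fin (d + 2) → Type)
    (M : ∀ i : Fin (d + 1), Set ((Y i.castSucc → ℝ) → (Y i.succ → ℝ)))
    {Z₁ Z₂ : Type} [Fintype Z₂]
    (N₁ : Set ((Y (Fin.last (d + 1)) → ℝ) → (Z₁ → ℝ)))
    (N₂ : Set ((Z₁ → ℝ) → (Z₂ → ℝ))) : Set ((Y 0 → ℝ) → (Z₂ → ℝ)) :=
  UnifClosure { F | ∃ k₁, ∃ g ∈ WPre σ d Y M k₁, ∃ k₂, ∃ m ∈ layerPow N₁ k₁ k₂,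
      ∃ f ∈ layerPowOut N₂ k₂, F = fun v => f (act σ (m (act σ (g v)))) }

/-- The universality class `U(M₁, M₂, M₃)` of three layer spaces on a common space `ℝ^Z`. -/
def UClass3 (σ : ℝ → ℝ) {Z : Type} [Fintype Z] (M₁ M₂ M₃ : Set ((Z → ℝ) → (Z → ℝ))) :
    Set ((Z → ℝ) → (Z → ℝ)) :=
  UnifClosure { F | ∃ k₁ k₂, ∃ g ∈ layerPowIn M₁ k₁, ∃ m ∈ layerPow M₂ k₁ k₂,
      ∃ f ∈ layerPowOut M₃ k₂, F = fun v => f (act σ (m (act σ (g v)))) }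

/-- The invariant layer space `I = Aff_G(ℝ^Y, ℝ)`: all `G`-invariant affine maps, with `ℝ`
realized as the trivial permutation representation `ℝ^{Unit}`. -/
def InvAff (G : Type) [Group G] {Y : Type} [MulAction G Y] :
    Set ((Y → ℝ) → (Unit → ℝ)) :=
  { f | IsAffine f ∧ ∀ (g : G) (v : Y → ℝ), f (pSMul g v) = f v }

/-- The fully connected layer space `L = Aff(ℝ, ℝ)`, with `ℝ` realized as `ℝ^{Unit}`. -/
def Lfull : Set ((Unit → ℝ) → (Unit → ℝ)) :=
  { f | ∃ a b : ℝ, f = fun v _ => a * v () + b }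

/-- The width-1 convolutional layer space `C ⊆ Aff_G(ℝ^X, ℝ^X)`:
`v ↦ a·v + (bias constant on `G`-orbits)`, i.e. `v ↦ a·v + ∑ⱼ yⱼ 1_{Xⱼ}`. -/
def ConvG (G : Type) [Group G] {X : Type} [MulAction G X] : Set ((X → ℝ) → (X → ℝ)) :=
  { f | ∃ (a : ℝ) (b : X → ℝ), (∀ (g : G) (z : X), b (g • z) = b z) ∧
      f = fun v z => a * v z + b z }

/-- The width-1 convolutional layer space for `S_n` acting on `ℝ^n`:
`C = { v ↦ a·v + b𝟙 }`. -/
def ConvC (n : ℕ) : Set ((Fin n → ℝ) → (Fin n → ℝ)) :=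
  { f | ∃ a b : ℝ, f = fun v i => a * v i + b }

/-- The PointNet (DeepSets) layer space for `S_n` acting on `ℝ^n`:
`P = { v ↦ (a·Id + c·𝟙𝟙ᵀ) v + b𝟙 }`. -/
def PointNetP (n : ℕ) : Set ((Fin n → ℝ) → (Fin n → ℝ)) :=
  { f | ∃ a c b : ℝ, f = fun v i => a * v i + c * (∑ j, v j) + b }
end EquivUnivPreamble

open scoped ContDiff Convolution
open MeasureTheory Filter Topology

section ClosedSubspace

variable {E : Type*} [NormedAddCommGroup E] [NormedSpace ℝ E]

/-- A closed subspace containing the values of a differentiable curve contains its derivatives. -/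
theorem mem_of_hasDerivAt {W : Submodule ℝ E} (hW : IsClosed (W : Set E)) {u : ℝ → E} {u' : E}
    {a : ℝ} (hu : HasDerivAt u u' a) (h : ∀ t, u t ∈ W) : u' ∈ W := by
  have : IsClosed (W : Set E) := hW
  have h₁ := W.mkQL.hasFDerivAt.comp_hasDerivAt a hu
  have h₂ : W.mkQL ∘ u = fun _ => 0 := by
    funext t
    simpa using h t
  rw [h₂] at h₁
  simpa using h₁.unique (hasDerivAt_const a 0)

/-- A closed subspace containing the values of a function contains its Bochner integral. -/
theorem integral_mem_of_isClosed [CompleteSpace E] {W : Submodule ℝ E}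
    (hW : IsClosed (W : Set E)) {u : ℝ → E} (h : ∀ t, u t ∈ W) : ∫ t, u t ∈ W := by
  have : IsClosed (W : Set E) := hW
  by_cases hu : Integrable u
  · have h₁ := W.mkQL.integral_comp_comm hu
    have h₂ : ∀ t, W.mkQL (u t) = 0 := fun t => by simpa using h t
    simp only [h₂, integral_zero] at h₁
    simpa using h₁.symm
  · rw [integral_undef hu]
    exact W.zero_mem

end ClosedSubspace

section Ridge

variable {K : Set ℝ}

/-- The function `x ↦ f (a * x + b)` on `K`. -/
noncomputable def affComp (K : Set ℝ) (f : C(ℝ, ℝ)) (a b : ℝ) : C(K, ℝ) :=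
  ⟨fun x => f (a * x + b), by fun_prop⟩

@[simp]
theorem affComp_apply (f : C(ℝ, ℝ)) (a b : ℝ) (x : K) : affComp K f a b x = f (a * x + b) := rfl

/-- The identity function on `K`. -/
def coordMap (K : Set ℝ) : C(K, ℝ) := ⟨fun x => x, continuous_subtype_val⟩

@[simp]
theorem coordMap_apply (x : K) : coordMap K x = x := rfl

theorem continuous_affComp (f : C(ℝ, ℝ)) {a b : ℝ → ℝ} (ha : Continuous a) (hb : Continuous b) :
    Continuous fun s => affComp K f (a s) (b s) :=
  (ContinuousMap.curry ⟨fun q : ℝ × K => f (a q.1 * q.2 + b q.1), by fun_prop⟩).continuous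

variable [CompactSpace K]

theorem hasDerivAt_affComp {f f' : C(ℝ, ℝ)} (hf : ∀ x, HasDerivAt f (f' x) x) (p : C(K, ℝ))
    (a b : ℝ) :
    HasDerivAt (fun s => p * affComp K f s b) (p * coordMap K * affComp K f' a b) a := by
  set u : ℝ → C(K, ℝ) := fun s => p * coordMap K * affComp K f' s b with hu
  have huc : Continuous u :=
    continuous_const.mul (continuous_affComp f' continuous_id continuous_const)
  have key : (fun s => p * affComp K f s b) =
      fun s => p * affComp K f 0 b + ∫ t in (0 : ℝ)..s, u t := by
    funext s
    ext x
    have h₁ : (∫ t in (0 : ℝ)..s, u t) x = ∫ t in (0 : ℝ)..s, u t x :=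
      ((ContinuousMap.evalCLM ℝ x).intervalIntegral_comp_comm
        (huc.intervalIntegrable 0 s)).symm
    have h₂ : ∫ t in (0 : ℝ)..s, u t x = p x * f (s * x + b) - p x * f (0 * x + b) := by
      refine intervalIntegral.integral_eq_sub_of_hasDerivAt
        (f := fun t => p x * f (t * x + b)) (fun t _ => ?_) ?_
      · have h₃ : HasDerivAt (fun t : ℝ => t * (x : ℝ) + b) x t := by
          simpa using ((hasDerivAt_id t).mul_const (x : ℝ)).add_const b
        refine (((hf (t * x + b)).comp t h₃).const_mul (p x)).congr_deriv ?_
        change p x * (f' (t * x + b) * x) = p x * x * f' (t * x + b)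
        ring
      · exact ((ContinuousMap.evalCLM ℝ x).continuous.comp huc).intervalIntegrable 0 s
    simp only [ContinuousMap.add_apply, ContinuousMap.mul_apply, affComp_apply, h₁, h₂]
    ring
  rw [key]
  exact (intervalIntegral.integral_hasDerivAt_right (huc.intervalIntegrable 0 a)
    (huc.stronglyMeasurableAtFilter _ _) huc.continuousAt).const_add _

theorem pow_mul_affComp_mem {W : Submodule ℝ C(K, ℝ)} (hW : IsClosed (W : Set C(K, ℝ)))
    {g : ℝ → ℝ} (hg : ContDiff ℝ ∞ g)
    (h : ∀ a b, affComp K ⟨g, hg.continuous⟩ a b ∈ W) (n : ℕ) (a b : ℝ) :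
    coordMap K ^ n * affComp K
      ⟨iteratedDeriv n g, hg.continuous_iteratedDeriv n (mod_cast le_top)⟩ a b ∈ W := by
  induction n generalizing a b with
  | zero => simpa using h a b
  | succ n ih =>
    rw [pow_succ]
    refine mem_of_hasDerivAt hW (hasDerivAt_affComp (fun x => ?_) _ a b) fun t => ih t b
    simp only [ContinuousMap.coe_mk, iteratedDeriv_succ]
    exact (hg.differentiable_iteratedDeriv n (mod_cast WithTop.coe_lt_top _) x).hasDerivAt

theorem affComp_convolution_mem {W : Submodule ℝ C(K, ℝ)} (hW : IsClosed (W : Set C(K, ℝ)))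
    {f : C(ℝ, ℝ)} (h : ∀ a b, affComp K f a b ∈ W) {φ : ℝ → ℝ} (hφ : Continuous φ)
    (hφs : HasCompactSupport φ)
    (hg : Continuous (φ ⋆[ContinuousLinearMap.lsmul ℝ ℝ, volume] f)) (a b : ℝ) :
    affComp K ⟨φ ⋆[ContinuousLinearMap.lsmul ℝ ℝ, volume] f, hg⟩ a b ∈ W := by
  set u : ℝ → C(K, ℝ) := fun t => φ t • affComp K f a (b - t) with hu
  have huc : Continuous u :=
    hφ.smul (continuous_affComp f continuous_const (continuous_const.sub continuous_id))
  have hui : Integrable u := huc.integrable_of_hasCompactSupport hφs.smul_right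
  have key : affComp K ⟨φ ⋆[ContinuousLinearMap.lsmul ℝ ℝ, volume] f, hg⟩ a b = ∫ t, u t := by
    ext x
    have h₁ : (∫ t, u t) x = ∫ t, u t x :=
      ((ContinuousMap.evalCLM ℝ x).integral_comp_comm hui).symm
    rw [h₁]
    simp [hu, convolution_def, add_sub_assoc]
  rw [key]
  exact integral_mem_of_isClosed hW fun t => W.smul_mem _ (h _ _)

end Ridge

theorem exists_polynomial_derivative_eq {n : ℕ} {p : Polynomial ℝ} (hp : p.degree < n) :
    ∃ q : Polynomial ℝ, q.degree < (n + 1 : ℕ) ∧ q.derivative = p := by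
  refine ⟨∑ i ∈ Finset.range n, Polynomial.monomial (i + 1) (p.coeff i / (i + 1)), ?_, ?_⟩
  · refine Polynomial.mem_degreeLT.1 (Submodule.sum_mem _ fun i hi => Polynomial.mem_degreeLT.2 ?_)
    refine (Polynomial.degree_monomial_le _ _).trans_lt ?_
    have := Finset.mem_range.1 hi
    exact_mod_cast Nat.succ_lt_succ this
  · ext k
    simp only [Polynomial.derivative_sum, Polynomial.derivative_monomial,
      Polynomial.finsetSum_coeff, Polynomial.coeff_monomial]
    have h : ∀ i : ℕ, p.coeff i / ((i : ℝ) + 1) * ((i + 1 : ℕ) : ℝ) = p.coeff i := fun i => by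
      push_cast
      field_simp
    simp only [h, Nat.add_sub_cancel, Finset.sum_ite_eq', Finset.mem_range]
    split_ifs with hk
    · rfl
    · refine (Polynomial.coeff_eq_zero_of_degree_lt (hp.trans_le ?_)).symm
      exact_mod_cast not_lt.1 hk

theorem exists_polynomial_of_iteratedDeriv_eq_zero {n : ℕ} {g : ℝ → ℝ} (hg : ContDiff ℝ ∞ g)
    (h : ∀ x, iteratedDeriv n g x = 0) :
    ∃ p : Polynomial ℝ, p.degree < n ∧ ∀ x, g x = p.eval x := by
  induction n generalizing g with
  | zero =>
    refine ⟨0, ?_, fun x => ?_⟩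
    · simp
    · simpa using h x
  | succ n ih =>
    obtain ⟨hd, hg'⟩ := contDiff_infty_iff_deriv.1 hg
    obtain ⟨p, hp, hpg⟩ := ih hg' fun x => by rw [← iteratedDeriv_succ']; exact h x
    obtain ⟨q, hq, rfl⟩ := exists_polynomial_derivative_eq hp
    refine ⟨q + Polynomial.C (g 0 - q.eval 0), ?_, fun x => ?_⟩
    · refine (Polynomial.degree_add_le _ _).trans_lt (max_lt hq ?_)
      exact Polynomial.degree_C_le.trans_lt (by exact_mod_cast n.succ_pos)
    · have h₁ : ∀ y, HasDerivAt (fun y => g y - q.eval y) 0 y := fun y => by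
        have := (hd y).hasDerivAt.sub (q.hasDerivAt y)
        rwa [hpg y, sub_self] at this
      have h₂ := is_const_of_deriv_eq_zero (fun y => (h₁ y).differentiableAt)
        (fun y => (h₁ y).deriv) x 0
      simp only [Polynomial.eval_add, Polynomial.eval_C]
      linarith

/-- A pointwise limit of polynomials of bounded degree is a polynomial. -/
theorem exists_polynomial_of_tendsto {n : ℕ} {f : ℝ → ℝ} {g : ℕ → ℝ → ℝ}
    (hg : ∀ i, ∃ p : Polynomial ℝ, p.degree < n ∧ ∀ x, g i x = p.eval x)
    (h : ∀ x, Tendsto (fun i => g i x) atTop (𝓝 (f x))) :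
    ∃ p : Polynomial ℝ, ∀ x, f x = p.eval x := by
  have hinj : Set.InjOn (fun i : ℕ => (i : ℝ)) (Finset.range n) :=
    fun i _ j _ hij => Nat.cast_injective hij
  refine ⟨Lagrange.interpolate (Finset.range n) (fun i : ℕ => (i : ℝ)) fun i => f i, fun x => ?_⟩
  refine tendsto_nhds_unique (h x) ?_
  have h₁ : ∀ i, g i x =
      (Lagrange.interpolate (Finset.range n) (fun k : ℕ => (k : ℝ)) fun k => g i k).eval x := by
    intro i
    obtain ⟨p, hp, hpg⟩ := hg i
    rw [hpg x, ← Lagrange.eq_interpolate_of_eval_eq _ hinj (by simpa using hp)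
      fun k _ => (hpg k).symm]
  simp only [h₁, Lagrange.interpolate_apply, Polynomial.eval_finsetSum, Polynomial.eval_mul,
    Polynomial.eval_C]
  exact tendsto_finsetSum _ fun k _ => (h k).mul_const _

/-- Leshno–Lin–Pinkus–Schocken: the ridge functions `x ↦ σ (a * x + b)` of a continuous
non-polynomial `σ` span a dense subspace of the continuous functions on a compact interval. -/
theorem topologicalClosure_span_affComp_eq_top {σ : C(ℝ, ℝ)} (hσ : NotPolynomial σ) (r s : ℝ) :
    (Submodule.span ℝ (Set.range fun q : ℝ × ℝ =>
      affComp (Set.Icc r s) σ q.1 q.2)).topologicalClosure = ⊤ := by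
  set W := (Submodule.span ℝ (Set.range fun q : ℝ × ℝ =>
    affComp (Set.Icc r s) σ q.1 q.2)).topologicalClosure with hWdef
  have hW : IsClosed (W : Set C(Set.Icc r s, ℝ)) := Submodule.isClosed_topologicalClosure _
  have hmem : ∀ a b, affComp (Set.Icc r s) σ a b ∈ W := fun a b =>
    Submodule.le_topologicalClosure _ (Submodule.subset_span ⟨(a, b), rfl⟩)
  have hpow : ∀ n, coordMap (Set.Icc r s) ^ n ∈ W := by
    intro n
    by_contra hn
    refine hσ (exists_polynomial_of_tendsto (n := n)
      (g := fun i => (⟨1 / (2 * ((i : ℝ) + 1)), 1 / ((i : ℝ) + 1), by positivity, by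
        gcongr; linarith⟩ : ContDiffBump (0 : ℝ)).normed volume
          ⋆[ContinuousLinearMap.lsmul ℝ ℝ, volume] σ) (fun i => ?_)
      (ContDiffBump.convolution_tendsto_right_of_continuous
        tendsto_one_div_add_atTop_nhds_zero_nat σ.continuous))
    set φ : ContDiffBump (0 : ℝ) := ⟨1 / (2 * ((i : ℝ) + 1)), 1 / ((i : ℝ) + 1), by positivity, by
        gcongr; linarith⟩
    have hg : ContDiff ℝ ∞ (φ.normed volume ⋆[ContinuousLinearMap.lsmul ℝ ℝ, volume] σ) :=
      φ.hasCompactSupport_normed.contDiff_convolution_left _ φ.contDiff_normed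
        σ.continuous.locallyIntegrable
    refine exists_polynomial_of_iteratedDeriv_eq_zero hg fun b => ?_
    by_contra hb
    have h₁ := pow_mul_affComp_mem hW hg (affComp_convolution_mem hW hmem
      (φ.contDiff_normed (n := 0)).continuous φ.hasCompactSupport_normed hg.continuous) n 0 b
    refine hn ?_
    convert W.smul_mem (iteratedDeriv n
      (φ.normed volume ⋆[ContinuousLinearMap.lsmul ℝ ℝ, volume] σ) b)⁻¹ h₁ using 1
    ext x
    simp only [ContinuousMap.smul_apply, ContinuousMap.mul_apply, affComp_apply, zero_mul,
      zero_add, ContinuousMap.coe_mk, smul_eq_mul]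
    field_simp
  have hpoly : ∀ p : Polynomial ℝ, p.toContinuousMapOn (Set.Icc r s) ∈ W := by
    intro p
    have : p.toContinuousMapOn (Set.Icc r s) =
        ∑ i ∈ Finset.range (p.natDegree + 1), p.coeff i • coordMap (Set.Icc r s) ^ i := by
      ext x
      simp [Polynomial.eval_eq_sum_range]
    rw [this]
    exact W.sum_mem fun i _ => W.smul_mem _ (hpow i)
  refine eq_top_iff.2 fun f _ => ?_
  have hf := continuousMap_mem_polynomialFunctions_closure r s f
  refine closure_minimal (fun g hg => ?_) hW hf
  obtain ⟨p, -, rfl⟩ := hg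
  exact hpoly p

theorem exists_mem_span_ridge_near {σ : ℝ → ℝ} (hσc : Continuous σ) (hσ : NotPolynomial σ)
    {f : ℝ → ℝ} (hf : Continuous f) (r s : ℝ) {ε : ℝ} (hε : 0 < ε) :
    ∃ t ∈ Submodule.span ℝ (Set.range fun q : ℝ × ℝ => fun x => σ (q.1 * x + q.2)),
      ∀ x ∈ Set.Icc r s, |f x - t x| < ε := by
  have h : affComp (Set.Icc r s) ⟨f, hf⟩ 1 0 ∈ (Submodule.span ℝ (Set.range fun q : ℝ × ℝ =>
      affComp (Set.Icc r s) ⟨σ, hσc⟩ q.1 q.2)).topologicalClosure := by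
    rw [topologicalClosure_span_affComp_eq_top hσ]
    trivial
  obtain ⟨g, hg, hgf⟩ := Metric.mem_closure_iff.1 h ε hε
  have hext : ∃ t ∈ Submodule.span ℝ (Set.range fun q : ℝ × ℝ => fun x => σ (q.1 * x + q.2)),
      ∀ x : Set.Icc r s, g x = t x := by
    clear hgf
    induction hg using Submodule.span_induction with
    | mem g hg =>
      obtain ⟨q, rfl⟩ := hg
      exact ⟨_, Submodule.subset_span ⟨q, rfl⟩, fun x => rfl⟩
    | zero => exact ⟨0, zero_mem _, fun x => rfl⟩
    | add g₁ g₂ _ _ h₁ h₂ =>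
      obtain ⟨t₁, ht₁, e₁⟩ := h₁
      obtain ⟨t₂, ht₂, e₂⟩ := h₂
      exact ⟨t₁ + t₂, add_mem ht₁ ht₂, fun x => by simp [e₁, e₂]⟩
    | smul c g _ h =>
      obtain ⟨t, ht, e⟩ := h
      exact ⟨c • t, Submodule.smul_mem _ c ht, fun x => by simp [e]⟩
  obtain ⟨t, ht, hgt⟩ := hext
  refine ⟨t, ht, fun x hx => ?_⟩
  have := (ContinuousMap.dist_lt_iff hε).1 hgf ⟨x, hx⟩
  simpa [hgt, Real.dist_eq] using this

section Separation

variable {E : Type*} [TopologicalSpace E] {σ : ℝ → ℝ}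

/-- The span of the functions `σ ∘ h` for `h ∈ S`. -/
def actSpan (σ : ℝ → ℝ) (S : Submodule ℝ (E → ℝ)) : Submodule ℝ (E → ℝ) :=
  Submodule.span ℝ ((fun h : E → ℝ => σ ∘ h) '' S)

theorem exists_mem_actSpan_near_comp (hσc : Continuous σ) (hσ : NotPolynomial σ)
    {S : Submodule ℝ (E → ℝ)} (hone : 1 ∈ S) {h : E → ℝ} (hh : h ∈ S) (hhc : Continuous h)
    {f : ℝ → ℝ} (hf : Continuous f) {K : Set E} (hK : IsCompact K) {ε : ℝ} (hε : 0 < ε) :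
    ∃ t ∈ actSpan σ S, ∀ x ∈ K, |f (h x) - t x| < ε := by
  obtain ⟨r, hr⟩ := (hK.image hhc).isBounded.subset_closedBall 0
  rw [Real.closedBall_eq_Icc] at hr
  obtain ⟨t, ht, hft⟩ := exists_mem_span_ridge_near hσc hσ hf (0 - r) (0 + r) hε
  refine ⟨t ∘ h, ?_, fun x hx => hft _ (hr ⟨x, hx, rfl⟩)⟩
  clear hft
  induction ht using Submodule.span_induction with
  | mem g hg =>
    obtain ⟨q, rfl⟩ := hg
    refine Submodule.subset_span ⟨q.1 • h + q.2 • 1,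
      S.add_mem (S.smul_mem _ hh) (S.smul_mem _ hone), ?_⟩
    funext x
    simp
  | zero => exact zero_mem _
  | add _ _ _ _ h₁ h₂ => exact add_mem h₁ h₂
  | smul c _ _ h => exact Submodule.smul_mem _ c h

/-- If `S` is a space of continuous functions containing the constants, every continuous function
that is constant on the classes not separated by `S` is, on compact sets, a uniform limit of
linear combinations of the functions `σ ∘ h` with `h ∈ S`. -/
theorem exists_mem_actSpan_near (hσc : Continuous σ) (hσ : NotPolynomial σ)
    {S : Submodule ℝ (E → ℝ)} (hone : 1 ∈ S) (hS : ∀ h ∈ S, Continuous h) {F : E → ℝ}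
    (hF : Continuous F) (hFS : ∀ u v, (∀ h ∈ S, h u = h v) → F u = F v) {K : Set E}
    (hK : IsCompact K) {ε : ℝ} (hε : 0 < ε) :
    ∃ t ∈ actSpan σ S, ∀ x ∈ K, |F x - t x| < ε := by
  have : CompactSpace K := isCompact_iff_compactSpace.1 hK
  let s : Setoid K :=
    { r := fun u v => ∀ h ∈ S, h u = h v
      iseqv := ⟨fun _ _ _ => rfl, fun H h hh => (H h hh).symm,
        fun H H' h hh => (H h hh).trans (H' h hh)⟩ }
  let P : Submonoid C(Quotient s, ℝ) :=
    { carrier := {f | ∃ h ∈ S, ∀ x : K, f ⟦x⟧ = Real.exp (h x)}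
      one_mem' := ⟨0, S.zero_mem, fun x => by simp⟩
      mul_mem' := by
        rintro f g ⟨h, hh, hf⟩ ⟨k, hk, hg⟩
        exact ⟨h + k, S.add_mem hh hk, fun x => by simp [hf, hg, Real.exp_add]⟩ }
  have hsep : (Algebra.adjoin ℝ (P : Set C(Quotient s, ℝ))).SeparatesPoints := by
    intro x y hxy
    induction x using Quotient.inductionOn with | _ u
    induction y using Quotient.inductionOn with | _ v
    have huv : ¬ ∀ h ∈ S, h u = h v := fun H => hxy (Quotient.sound H)
    push Not at huv
    obtain ⟨h, hh, hne⟩ := huv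
    refine ⟨_, ⟨⟨Quotient.lift (fun x : K => Real.exp (h x)) fun a b H => by rw [H h hh],
      (Real.continuous_exp.comp ((hS h hh).comp continuous_subtype_val)).quotient_lift _⟩,
      Algebra.subset_adjoin ⟨h, hh, fun x => rfl⟩, rfl⟩, ?_⟩
    simpa using hne
  have happrox : ∀ f ∈ Submodule.span ℝ (P : Set C(Quotient s, ℝ)), ∀ δ : ℝ, 0 < δ →
      ∃ t ∈ actSpan σ S, ∀ x : K, |f ⟦x⟧ - t x| < δ := by
    intro f hf
    induction hf using Submodule.span_induction with
    | mem f hf =>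
      obtain ⟨h, hh, hfh⟩ := hf
      intro δ hδ
      obtain ⟨t, ht, H⟩ := exists_mem_actSpan_near_comp hσc hσ hone hh (hS h hh)
        Real.continuous_exp hK hδ
      exact ⟨t, ht, fun x => by rw [hfh]; exact H x x.2⟩
    | zero => exact fun δ hδ => ⟨0, zero_mem _, fun x => by simpa using hδ⟩
    | add f g _ _ hf hg =>
      intro δ hδ
      obtain ⟨t, ht, H⟩ := hf (δ / 2) (half_pos hδ)
      obtain ⟨t', ht', H'⟩ := hg (δ / 2) (half_pos hδ)
      refine ⟨t + t', add_mem ht ht', fun x => ?_⟩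
      have h₁ : (f + g) ⟦x⟧ - (t + t') x = (f ⟦x⟧ - t x) + (g ⟦x⟧ - t' x) := by
        simp only [ContinuousMap.add_apply, Pi.add_apply]
        ring
      rw [h₁]
      exact (abs_add_le _ _).trans_lt ((add_lt_add (H x) (H' x)).trans_eq (add_halves δ))
    | smul c f _ hf =>
      intro δ hδ
      have hc : 0 < |c| + 1 := by positivity
      obtain ⟨t, ht, H⟩ := hf (δ / (|c| + 1)) (by positivity)
      refine ⟨c • t, Submodule.smul_mem _ c ht, fun x => ?_⟩
      have h₁ : (c • f) ⟦x⟧ - (c • t) x = c * (f ⟦x⟧ - t x) := by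
        simp only [ContinuousMap.smul_apply, Pi.smul_apply, smul_eq_mul]
        ring
      rw [h₁, abs_mul]
      have h₂ := (lt_div_iff₀ hc).1 (H x)
      nlinarith [abs_nonneg (f ⟦x⟧ - t x)]
  obtain ⟨⟨g, hg⟩, hgF⟩ :=
    ContinuousMap.exists_mem_subalgebra_near_continuous_of_separatesPoints _ hsep
      (Quotient.lift (fun x : K => F x) fun a b H => hFS a b H)
      ((hF.comp continuous_subtype_val).quotient_lift _) (ε / 2) (half_pos hε)
  rw [← Subalgebra.mem_toSubmodule, Algebra.adjoin_eq_span, Submonoid.closure_eq] at hg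
  obtain ⟨t, ht, H⟩ := happrox g hg (ε / 2) (half_pos hε)
  refine ⟨t, ht, fun x hx => ?_⟩
  have h₁ : |g (Quotient.mk s ⟨x, hx⟩) - F x| < ε / 2 := hgF _
  have h₂ := H ⟨x, hx⟩
  rw [abs_lt] at *
  constructor <;> linarith [h₁.1, h₁.2, h₂.1, h₂.2]

end Separation

theorem continuous_of_mem_unifClosure {A B : Type} [TopologicalSpace A]
    [WeaklyLocallyCompactSpace A] [PseudoMetricSpace B] {S : Set (A → B)}
    (hS : ∀ f ∈ S, Continuous f) {F : A → B} (hF : F ∈ UnifClosure S) : Continuous F := by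
  refine continuous_of_locally_uniform_approx_of_continuousAt fun x u hu => ?_
  obtain ⟨ε, hε, hεu⟩ := Metric.mem_uniformity_dist.1 hu
  obtain ⟨K, hK, hKx⟩ := exists_compact_mem_nhds x
  obtain ⟨g, hg, hgF⟩ := hF K hK ε hε
  exact ⟨K, hKx, g, (hS g hg).continuousAt, fun y hy => hεu (hgF y hy)⟩

theorem eq_of_mem_unifClosure {A B : Type} [TopologicalSpace A] [MetricSpace B]
    {S : Set (A → B)} {x y : A} (hS : ∀ f ∈ S, f x = f y) {F : A → B}
    (hF : F ∈ UnifClosure S) : F x = F y := by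
  refine dist_le_zero.1 (le_of_forall_pos_le_add fun ε hε => ?_)
  obtain ⟨g, hg, hgF⟩ := hF {x, y} (Set.toFinite _).isCompact (ε / 2) (half_pos hε)
  have h₁ := hgF x (by simp)
  have h₂ := hgF y (by simp)
  rw [hS g hg] at h₁
  linarith [dist_triangle_right (F x) (F y) (g y)]

theorem subset_unifClosure {A B : Type} [TopologicalSpace A] [PseudoMetricSpace B]
    (S : Set (A → B)) : S ⊆ UnifClosure S :=
  fun F hF _ _ _ hε => ⟨F, hF, fun _ _ => by simpa using hε⟩

section Networks

variable {A Y Z : Type} {σ : ℝ → ℝ}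

/-- Concatenation of tensors of multiplicities `k₁` and `k₂`. -/
def pair {k₁ k₂ : ℕ} (w₁ : Fin k₁ × Y → ℝ) (w₂ : Fin k₂ × Y → ℝ) : Fin (k₁ + k₂) × Y → ℝ :=
  fun p => Fin.append (fun i => w₁ (i, p.2)) (fun j => w₂ (j, p.2)) p.1

@[simp]
theorem pair_castAdd {k₁ k₂ : ℕ} (w₁ : Fin k₁ × Y → ℝ) (w₂ : Fin k₂ × Y → ℝ) (i : Fin k₁)
    (y : Y) : pair w₁ w₂ (Fin.castAdd k₂ i, y) = w₁ (i, y) := by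
  simp [pair]

@[simp]
theorem pair_natAdd {k₁ k₂ : ℕ} (w₁ : Fin k₁ × Y → ℝ) (w₂ : Fin k₂ × Y → ℝ) (j : Fin k₂)
    (y : Y) : pair w₁ w₂ (Fin.natAdd k₁ j, y) = w₂ (j, y) := by
  simp [pair]

theorem act_pair {k₁ k₂ : ℕ} (w₁ : Fin k₁ × Y → ℝ) (w₂ : Fin k₂ × Y → ℝ) :
    act σ (pair w₁ w₂) = pair (act σ w₁) (act σ w₂) := by
  funext ⟨i, y⟩
  induction i using Fin.addCases <;> simp [act]

theorem layerPowIn_pair {M : Set ((Y → ℝ) → (Z → ℝ))} {k₁ k₂ : ℕ}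
    {g₁ : (Y → ℝ) → (Fin k₁ × Z → ℝ)} {g₂ : (Y → ℝ) → (Fin k₂ × Z → ℝ)}
    (h₁ : g₁ ∈ layerPowIn M k₁) (h₂ : g₂ ∈ layerPowIn M k₂) :
    (fun v => pair (g₁ v) (g₂ v)) ∈ layerPowIn M (k₁ + k₂) := by
  obtain ⟨f₁, hf₁, e₁⟩ := h₁
  obtain ⟨f₂, hf₂, e₂⟩ := h₂
  refine ⟨Fin.append f₁ f₂, fun i => ?_, fun v ⟨i, z⟩ => ?_⟩
  · induction i using Fin.addCases <;> simp [hf₁, hf₂]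
  · induction i using Fin.addCases <;> simp [e₁, e₂]

theorem layerPow_pair {M : Set ((Y → ℝ) → (Z → ℝ))} (hM : 0 ∈ M) {k₁ k₂ h₁ h₂ : ℕ}
    {m₁ : (Fin k₁ × Y → ℝ) → (Fin h₁ × Z → ℝ)} {m₂ : (Fin k₂ × Y → ℝ) → (Fin h₂ × Z → ℝ)}
    (H₁ : m₁ ∈ layerPow M k₁ h₁) (H₂ : m₂ ∈ layerPow M k₂ h₂) :
    ∃ m ∈ layerPow M (k₁ + k₂) (h₁ + h₂),
      ∀ w₁ w₂, m (pair w₁ w₂) = pair (m₁ w₁) (m₂ w₂) := by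
  obtain ⟨f₁, hf₁, e₁⟩ := H₁
  obtain ⟨f₂, hf₂, e₂⟩ := H₂
  let f : Fin (h₁ + h₂) → Fin (k₁ + k₂) → (Y → ℝ) → (Z → ℝ) :=
    Fin.append (fun i => Fin.append (f₁ i) fun _ => 0) (fun i => Fin.append (fun _ => 0) (f₂ i))
  refine ⟨fun v p => ∑ j, f p.1 j (fun y => v (j, y)) p.2, ⟨f, fun i j => ?_, fun v p => rfl⟩,
    fun w₁ w₂ => ?_⟩
  · induction i using Fin.addCases <;> induction j using Fin.addCases <;>
      simp [f, hf₁, hf₂, hM]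
  · funext ⟨i, z⟩
    induction i using Fin.addCases <;> simp [f, Fin.sum_univ_add, e₁, e₂]

theorem layerPowOut_pair {M : Set ((Y → ℝ) → (Z → ℝ))} {k₁ k₂ : ℕ}
    {f₁ : (Fin k₁ × Y → ℝ) → (Z → ℝ)} {f₂ : (Fin k₂ × Y → ℝ) → (Z → ℝ)}
    (H₁ : f₁ ∈ layerPowOut M k₁) (H₂ : f₂ ∈ layerPowOut M k₂) :
    ∃ f ∈ layerPowOut M (k₁ + k₂), ∀ w₁ w₂, f (pair w₁ w₂) = f₁ w₁ + f₂ w₂ := by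
  obtain ⟨c₁, hc₁, e₁⟩ := H₁
  obtain ⟨c₂, hc₂, e₂⟩ := H₂
  let c : Fin (k₁ + k₂) → (Y → ℝ) → (Z → ℝ) := Fin.append c₁ c₂
  refine ⟨fun v z => ∑ j, c j (fun y => v (j, y)) z, ⟨c, fun j => ?_, fun v p => rfl⟩,
    fun w₁ w₂ => ?_⟩
  · induction j using Fin.addCases <;> simp [c, hc₁, hc₂]
  · funext z
    simp [c, Fin.sum_univ_add, e₁, e₂]

theorem layerPowOut_smul {N : Submodule ℝ ((Y → ℝ) → (Z → ℝ))} {k : ℕ}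
    {f : (Fin k × Y → ℝ) → (Z → ℝ)} (hf : f ∈ layerPowOut (N : Set _) k) (c : ℝ) :
    c • f ∈ layerPowOut (N : Set _) k := by
  obtain ⟨f, hf, e⟩ := hf
  exact ⟨fun j => c • f j, fun j => N.smul_mem c (hf j), fun v z => by simp [e, Finset.mul_sum]⟩

theorem continuous_layerPowIn {M : Set ((Y → ℝ) → (Z → ℝ))} (hM : ∀ f ∈ M, Continuous f) {k : ℕ}
    {g : (Y → ℝ) → (Fin k × Z → ℝ)} (hg : g ∈ layerPowIn M k) : Continuous g := by
  obtain ⟨f, hf, e⟩ := hg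
  refine continuous_pi fun p => ?_
  simp only [e]
  exact (continuous_apply p.2).comp (hM _ (hf _))

theorem continuous_layerPow {M : Set ((Y → ℝ) → (Z → ℝ))} (hM : ∀ f ∈ M, Continuous f)
    {k h : ℕ} {g : (Fin k × Y → ℝ) → (Fin h × Z → ℝ)} (hg : g ∈ layerPow M k h) :
    Continuous g := by
  obtain ⟨f, hf, e⟩ := hg
  refine continuous_pi fun p => ?_
  simp only [e]
  exact continuous_finsetSum _ fun j _ =>
    (continuous_apply p.2).comp ((hM _ (hf _ _)).comp (by fun_prop))

theorem continuous_layerPowOut {M : Set ((Y → ℝ) → (Z → ℝ))} (hM : ∀ f ∈ M, Continuous f)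
    {k : ℕ} {g : (Fin k × Y → ℝ) → (Z → ℝ)} (hg : g ∈ layerPowOut M k) :
    Continuous g := by
  obtain ⟨f, hf, e⟩ := hg
  refine continuous_pi fun z => ?_
  simp only [e]
  exact continuous_finsetSum _ fun j _ =>
    (continuous_apply z).comp ((hM _ (hf _)).comp (by fun_prop))

theorem continuous_act (hσ : Continuous σ) : Continuous (act σ : (Z → ℝ) → (Z → ℝ)) :=
  continuous_pi fun z => hσ.comp (continuous_apply z)

theorem wPre_pair {d : ℕ} {Y : Fin (d + 2) → Type}
    {M : ∀ i : Fin (d + 1), Set ((Y i.castSucc → ℝ) → (Y i.succ → ℝ))} (hM : ∀ i, 0 ∈ M i)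
    {k₁ k₂ : ℕ} {g₁ : (Y 0 → ℝ) → (Fin k₁ × Y (Fin.last (d + 1)) → ℝ)}
    {g₂ : (Y 0 → ℝ) → (Fin k₂ × Y (Fin.last (d + 1)) → ℝ)}
    (h₁ : g₁ ∈ WPre σ d Y M k₁) (h₂ : g₂ ∈ WPre σ d Y M k₂) :
    (fun v => pair (g₁ v) (g₂ v)) ∈ WPre σ d Y M (k₁ + k₂) := by
  induction d generalizing k₁ k₂ with
  | zero => exact layerPowIn_pair h₁ h₂
  | succ d ih =>
    obtain ⟨l₁, u₁, hu₁, f₁, hf₁, rfl⟩ := h₁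
    obtain ⟨l₂, u₂, hu₂, f₂, hf₂, rfl⟩ := h₂
    obtain ⟨m, hm, e⟩ := layerPow_pair (hM _) hf₁ hf₂
    refine ⟨l₁ + l₂, _, ih (fun i => hM i.castSucc) hu₁ hu₂, m, hm, ?_⟩
    funext v
    rw [act_pair, e]

theorem wPre_nonempty {d : ℕ} {Y : Fin (d + 2) → Type}
    {M : ∀ i : Fin (d + 1), Set ((Y i.castSucc → ℝ) → (Y i.succ → ℝ))} (hM : ∀ i, 0 ∈ M i)
    (k : ℕ) : (WPre σ d Y M k).Nonempty := by
  induction d generalizing k with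
  | zero => exact ⟨fun _ _ => 0, fun _ => 0, fun _ => hM 0, fun _ _ => rfl⟩
  | succ d ih =>
    obtain ⟨g, hg⟩ := ih (Y := fun i => Y i.castSucc) (M := fun i => M i.castSucc)
      (fun i => hM i.castSucc) 0
    exact ⟨_, 0, g, hg, fun _ _ => 0, ⟨fun _ _ => 0, fun _ _ => hM _, fun _ _ => by simp⟩, rfl⟩

theorem continuous_wPre (hσ : Continuous σ) {d : ℕ} {Y : Fin (d + 2) → Type}
    {M : ∀ i : Fin (d + 1), Set ((Y i.castSucc → ℝ) → (Y i.succ → ℝ))}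
    (hM : ∀ i, ∀ f ∈ M i, Continuous f) {k : ℕ}
    {g : (Y 0 → ℝ) → (Fin k × Y (Fin.last (d + 1)) → ℝ)} (hg : g ∈ WPre σ d Y M k) :
    Continuous g := by
  induction d generalizing k with
  | zero => exact continuous_layerPowIn (hM 0) hg
  | succ d ih =>
    obtain ⟨l, u, hu, f, hf, rfl⟩ := hg
    exact (continuous_layerPow (hM _) hf).comp
      ((continuous_act hσ).comp (ih (fun i => hM i.castSucc) hu))

/-- The real-valued networks `N(M₀, …, M_d, N)` of arbitrary widths, as a vector space. -/
def netSpace (σ : ℝ → ℝ) {d : ℕ} {Y : Fin (d + 2) → Type}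
    {M : ∀ i : Fin (d + 1), Set ((Y i.castSucc → ℝ) → (Y i.succ → ℝ))} (hM : ∀ i, 0 ∈ M i)
    (N : Submodule ℝ ((Y (Fin.last (d + 1)) → ℝ) → (Unit → ℝ))) :
    Submodule ℝ ((Y 0 → ℝ) → ℝ) where
  carrier := {h | ∃ k, ∃ g ∈ WPre σ d Y M k, ∃ f ∈ layerPowOut (N : Set _) k,
    h = fun v => f (act σ (g v)) ()}
  zero_mem' := by
    obtain ⟨g, hg⟩ := wPre_nonempty (σ := σ) hM 0
    exact ⟨0, g, hg, 0, ⟨fun _ => 0, fun _ => N.zero_mem, fun _ _ => by simp⟩, rfl⟩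
  add_mem' := by
    rintro _ _ ⟨k₁, g₁, hg₁, f₁, hf₁, rfl⟩ ⟨k₂, g₂, hg₂, f₂, hf₂, rfl⟩
    obtain ⟨f, hf, e⟩ := layerPowOut_pair hf₁ hf₂
    refine ⟨_, _, wPre_pair hM hg₁ hg₂, f, hf, ?_⟩
    funext v
    simp [act_pair, e]
  smul_mem' := by
    rintro c _ ⟨k, g, hg, f, hf, rfl⟩
    exact ⟨k, g, hg, c • f, layerPowOut_smul hf c, rfl⟩

variable {d : ℕ} {Y : Fin (d + 2) → Type}
  {M : ∀ i : Fin (d + 1), Set ((Y i.castSucc → ℝ) → (Y i.succ → ℝ))} (hM : ∀ i, 0 ∈ M i)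
  {N : Submodule ℝ ((Y (Fin.last (d + 1)) → ℝ) → (Unit → ℝ))}

theorem one_mem_netSpace (hN : 1 ∈ N) : 1 ∈ netSpace σ hM N := by
  obtain ⟨g, hg⟩ := wPre_nonempty (σ := σ) hM 1
  exact ⟨1, g, hg, 1, ⟨fun _ => 1, fun _ => hN, fun _ _ => by simp⟩, rfl⟩

theorem continuous_of_mem_netSpace (hσ : Continuous σ) (hMc : ∀ i, ∀ f ∈ M i, Continuous f)
    (hNc : ∀ f ∈ N, Continuous f) {h : (Y 0 → ℝ) → ℝ} (hh : h ∈ netSpace σ hM N) :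
    Continuous h := by
  obtain ⟨k, g, hg, f, hf, rfl⟩ := hh
  exact (continuous_apply ()).comp ((continuous_layerPowOut hNc hf).comp
    ((continuous_act hσ).comp (continuous_wPre hσ hMc hg)))

/-- The networks of `netSpace` followed by the activation and a fully connected readout. -/
def readoutNets (σ : ℝ → ℝ) {d : ℕ} (Y : Fin (d + 2) → Type)
    (M : ∀ i : Fin (d + 1), Set ((Y i.castSucc → ℝ) → (Y i.succ → ℝ)))
    (N : Set ((Y (Fin.last (d + 1)) → ℝ) → (Unit → ℝ))) : Set ((Y 0 → ℝ) → (Unit → ℝ)) :=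
  { F | ∃ k₁, ∃ g ∈ WPre σ d Y M k₁, ∃ k₂, ∃ m ∈ layerPow N k₁ k₂,
      ∃ f ∈ layerPowOut Lfull k₂, F = fun v => f (act σ (m (act σ (g v)))) }

theorem actSpan_netSpace_le_readoutNets {t : (Y 0 → ℝ) → ℝ}
    (ht : t ∈ actSpan σ (netSpace σ hM N)) : (fun v _ => t v) ∈ readoutNets σ Y M N := by
  induction ht using Submodule.span_induction with
  | mem t ht =>
    obtain ⟨_, ⟨k, g, hg, f, ⟨c, hc, e⟩, rfl⟩, rfl⟩ := ht
    refine ⟨k, g, hg, 1, fun v p => f v p.2, ⟨fun _ => c, fun _ => hc, fun v p => e v p.2⟩,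
      fun v z => v (0, z), ⟨fun _ v => v, fun _ => ⟨1, 0, by simp⟩, fun v z => by simp⟩, rfl⟩
  | zero =>
    obtain ⟨g, hg⟩ := wPre_nonempty (σ := σ) hM 0
    exact ⟨0, g, hg, 0, 0, ⟨fun _ _ => 0, fun _ _ => N.zero_mem, fun _ _ => by simp⟩,
      0, ⟨fun _ => 0, fun j => j.elim0, fun _ _ => by simp⟩, rfl⟩
  | add t₁ t₂ _ _ h₁ h₂ =>
    obtain ⟨k₁, g₁, hg₁, l₁, m₁, hm₁, f₁, hf₁, e₁⟩ := h₁
    obtain ⟨k₂, g₂, hg₂, l₂, m₂, hm₂, f₂, hf₂, e₂⟩ := h₂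
    obtain ⟨m, hm, em⟩ := layerPow_pair N.zero_mem hm₁ hm₂
    obtain ⟨f, hf, ef⟩ := layerPowOut_pair hf₁ hf₂
    refine ⟨_, _, wPre_pair hM hg₁ hg₂, _, m, hm, f, hf, ?_⟩
    funext v z
    simp only [act_pair, em, ef, Pi.add_apply]
    rw [congrFun (congrFun e₁ v) z, congrFun (congrFun e₂ v) z]
  | smul c t _ h =>
    obtain ⟨k, g, hg, l, m, hm, f, ⟨a, ha, ea⟩, e⟩ := h
    refine ⟨k, g, hg, l, m, hm, fun v z => c * f v z, ⟨fun j v z => c * a j v z, fun j => ?_,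
      fun v z => by simp only [ea, Finset.mul_sum]⟩, ?_⟩
    · obtain ⟨p, q, hpq⟩ := ha j
      exact ⟨c * p, c * q, by funext v z; simp only [hpq]; ring⟩
    · funext v z
      exact congrArg (c * ·) (congrFun (congrFun e v) z)

theorem continuous_of_mem_readoutNets (hσ : Continuous σ) (hMc : ∀ i, ∀ f ∈ M i, Continuous f)
    (hNc : ∀ f ∈ N, Continuous f) {F : (Y 0 → ℝ) → (Unit → ℝ)} (hF : F ∈ readoutNets σ Y M N) :
    Continuous F := by
  obtain ⟨k, g, hg, l, m, hm, f, hf, rfl⟩ := hF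
  have hL : ∀ f ∈ Lfull, Continuous f := by
    rintro _ ⟨a, b, rfl⟩
    fun_prop
  exact (continuous_layerPowOut hL hf).comp ((continuous_act hσ).comp
    ((continuous_layerPow hNc hm).comp ((continuous_act hσ).comp (continuous_wPre hσ hMc hg))))

theorem eq_of_mem_readoutNets {u v : Y 0 → ℝ} (h : ∀ f ∈ netSpace σ hM N, f u = f v)
    {F : (Y 0 → ℝ) → (Unit → ℝ)} (hF : F ∈ readoutNets σ Y M N) : F u = F v := by
  obtain ⟨k, g, hg, l, m, ⟨c, hc, e⟩, f, hf, rfl⟩ := hF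
  have hm : m (act σ (g u)) = m (act σ (g v)) := by
    funext ⟨i, z⟩
    exact h _ ⟨k, g, hg, fun w z => m w (i, z), ⟨c i, hc i, fun w z => e w (i, z)⟩, rfl⟩
  simp only [hm]

end Networks

/-- The invariant affine maps, as a vector space. -/
def invAffSubmodule (G : Type) [Group G] (Y : Type) [MulAction G Y] :
    Submodule ℝ ((Y → ℝ) → (Unit → ℝ)) where
  carrier := InvAff G
  zero_mem' := ⟨⟨0, 0, fun _ => by simp⟩, fun _ _ => rfl⟩
  add_mem' := by
    rintro f f' ⟨⟨φ, b, h⟩, hf⟩ ⟨⟨φ', b', h'⟩, hf'⟩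
    refine ⟨⟨φ + φ', b + b', fun v => ?_⟩, fun g v => ?_⟩
    · simp only [Pi.add_apply, h, h', LinearMap.add_apply]
      abel
    · simp [hf, hf']
  smul_mem' := by
    rintro c f ⟨⟨φ, b, h⟩, hf⟩
    exact ⟨⟨c • φ, c • b, fun v => by simp [h]⟩, fun g v => by simp [hf]⟩

theorem one_mem_invAffSubmodule (G : Type) [Group G] (Y : Type) [MulAction G Y] :
    1 ∈ invAffSubmodule G Y :=
  ⟨⟨0, 1, fun _ => by simp⟩, fun _ _ => rfl⟩

theorem IsAffine.continuous {Y Z : Type} [Finite Y] {f : (Y → ℝ) → (Z → ℝ)} (hf : IsAffine f) :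
    Continuous f := by
  obtain ⟨φ, b, h⟩ := hf
  rw [funext h]
  refine Continuous.add (continuous_pi fun z => ?_) continuous_const
  exact ((LinearMap.proj z).comp φ).continuous_of_finiteDimensional

theorem IsLayerSpace.zero_mem {G Y Z : Type} [Group G] [MulAction G Y] [MulAction G Z]
    {M : Set ((Y → ℝ) → (Z → ℝ))} (hM : IsLayerSpace G M) : 0 ∈ M := by
  obtain ⟨k, φ, -, rfl⟩ := hM
  exact ⟨0, 0, fun _ _ => rfl, fun v => by simp⟩

theorem IsLayerSpace.isAffine {G Y Z : Type} [Group G] [MulAction G Y] [MulAction G Z]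
    {M : Set ((Y → ℝ) → (Z → ℝ))} (hM : IsLayerSpace G M) {f : (Y → ℝ) → (Z → ℝ)}
    (hf : f ∈ M) : IsAffine f := by
  obtain ⟨k, φ, -, rfl⟩ := hM
  obtain ⟨c, b, -, h⟩ := hf
  exact ⟨∑ i, c i • φ i, b, fun v => by simp [h]⟩

/-- Theorem `th:invariant_universality`: separation-constrained
universality for invariant networks.  For layer spaces `M₀, …, M_d` between permutation
representations of a finite group `G`, with `I = Aff_G(V_d, ℝ)` the invariant layer space
and `L = Aff(ℝ, ℝ)` the fully connected readout, and `σ` continuous and not a polynomial,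
setting `ρ = ρ(U(M₀, …, M_d, I))` we have `U(M₀, …, M_d, I, L) = C_ρ(V₀, ℝ)`. -/
theorem invariant_separation_constrained_universality
    {G : Type} [Group G] [Fintype G]
    {d : ℕ} {Y : Fin (d + 2) → Type} [∀ i, Fintype (Y i)] [∀ i, MulAction G (Y i)]
    (M : ∀ i : Fin (d + 1), Set ((Y i.castSucc → ℝ) → (Y i.succ → ℝ)))
    (hM : ∀ i, IsLayerSpace G (M i))
    (σ : ℝ → ℝ) (hσc : Continuous σ) (hσp : NotPolynomial σ) :
    UClassApp2 σ d Y M (InvAff G) Lfull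
      = Crho (sepRel (UClassApp1 σ d Y M (InvAff G))) := by
  have h₀ : ∀ i, 0 ∈ M i := fun i => (hM i).zero_mem
  have hMc : ∀ i, ∀ f ∈ M i, Continuous f := fun i f hf => ((hM i).isAffine hf).continuous
  set N := invAffSubmodule G (Y (Fin.last (d + 1)))
  have hNc : ∀ f ∈ N, Continuous f := fun f hf => hf.1.continuous
  have hSc : ∀ h ∈ netSpace σ h₀ N, Continuous h := fun h hh =>
    continuous_of_mem_netSpace h₀ hσc hMc hNc hh
  apply Set.Subset.antisymm
  · intro F hF
    refine ⟨continuous_of_mem_unifClosure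
      (fun f hf => continuous_of_mem_readoutNets (N := N) hσc hMc hNc hf) hF, fun p hp => ?_⟩
    refine eq_of_mem_unifClosure (fun f hf => eq_of_mem_readoutNets (N := N) h₀ ?_ hf) hF
    rintro _ ⟨k, g, hg, f, hf, rfl⟩
    exact congrFun (hp _ (subset_unifClosure _ ⟨k, g, hg, f, hf, rfl⟩)) ()
  · rintro F ⟨hFc, hF⟩ K hK ε hε
    have hFS : ∀ u v, (∀ h ∈ netSpace σ h₀ N, h u = h v) → F u () = F v () := fun u v huv => by
      refine congrFun (hF (u, v) fun f hf => eq_of_mem_unifClosure ?_ hf) ()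
      rintro _ ⟨k, g, hg, f, hf, rfl⟩
      funext
      exact huv _ ⟨k, g, hg, f, hf, rfl⟩
    obtain ⟨t, ht, hFt⟩ := exists_mem_actSpan_near hσc hσp
      (one_mem_netSpace h₀ (one_mem_invAffSubmodule G _)) hSc
      ((continuous_apply ()).comp hFc) hFS hK hε
    exact ⟨_, actSpan_netSpace_le_readoutNets h₀ ht, fun x hx =>
      (dist_pi_lt_iff hε).2 fun _ => hFt x hx⟩
end

section
/- Let n ≥ 1, let S_n act on ℝ^n by permuting coordinates, and let C = { v ↦ x·v + y𝟙 : x, y ∈ ℝ } ⊆ Aff_{S_n}(ℝ^n, ℝ^n) be the layer space of width-1 convolutional filters, where 𝟙 = (1,…,1)ᵀ. Assume σ : ℝ → ℝ is continuous and not a polynomial, and let d ≥ 2. Then U(C, …, C) (d copies of C) = { (x_1, …, x_n) ↦ (f(x_1), …, f(x_n)) : f ∈ C(ℝ, ℝ) }, and for n ≥ 2 this set is a proper subset of C_{S_n}(ℝ^n, ℝ^n), the space of continuous S_n-equivariant maps ℝ^n → ℝ^n. -/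
open scoped BigOperators

section RidgeSpan

variable {X : Type*} [TopologicalSpace X] [CompactSpace X]

/-- The closed span in `C(X, ℝ)` of the functions `x ↦ σ (a * ι x + b)`. -/
def ridgeSpan (ι : C(X, ℝ)) (σ : C(ℝ, ℝ)) : Submodule ℝ C(X, ℝ) :=
  (Submodule.span ℝ (Set.range fun p : ℝ × ℝ =>
    σ.comp (p.1 • ι + ContinuousMap.const X p.2))).topologicalClosure

theorem isClosed_ridgeSpan (ι : C(X, ℝ)) (σ : C(ℝ, ℝ)) :
    IsClosed (ridgeSpan ι σ : Set C(X, ℝ)) :=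
  Submodule.isClosed_topologicalClosure _

theorem comp_affine_mem_ridgeSpan (ι : C(X, ℝ)) (σ : C(ℝ, ℝ)) (a b : ℝ) :
    σ.comp (a • ι + ContinuousMap.const X b) ∈ ridgeSpan ι σ :=
  Submodule.le_topologicalClosure _ (Submodule.subset_span ⟨(a, b), rfl⟩)

theorem continuous_comp_affine (ι : C(X, ℝ)) (σ : C(ℝ, ℝ)) :
    Continuous fun p : ℝ × ℝ => σ.comp (p.1 • ι + ContinuousMap.const X p.2) := by
  refine (ContinuousMap.continuous_postcomp σ).comp ?_
  have h : Continuous fun b : ℝ => ContinuousMap.const X b := ContinuousMap.continuous_const'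
  exact (continuous_fst.smul continuous_const).add (h.comp continuous_snd)

theorem intervalIntegral_mem_of_isClosed {E : Type*} [NormedAddCommGroup E] [NormedSpace ℝ E]
    [CompleteSpace E] {M : Submodule ℝ E} (hM : IsClosed (M : Set E)) {c : ℝ → E}
    (hc : Continuous c) (hcM : ∀ t, c t ∈ M) (u v : ℝ) : ∫ t in u..v, c t ∈ M := by
  have : CompleteSpace M := hM.completeSpace_coe
  have hc' : Continuous fun t => (⟨c t, hcM t⟩ : M) := hc.subtype_mk hcM
  have h := M.subtypeL.intervalIntegral_comp_comm
    (hc'.intervalIntegrable (μ := MeasureTheory.volume) u v)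
  simp only [Submodule.subtypeL_apply] at h
  rw [h]
  exact Subtype.prop _

theorem continuousMap_intervalIntegral_apply {c : ℝ → C(X, ℝ)} (hc : Continuous c) (u v : ℝ)
    (x : X) : (∫ t in u..v, c t) x = ∫ t in u..v, c t x :=
  ((ContinuousMap.evalCLM ℝ x).intervalIntegral_comp_comm
    (hc.intervalIntegrable (μ := MeasureTheory.volume) u v)).symm

theorem HasDerivAt.mem_of_isClosed {E : Type*} [NormedAddCommGroup E] [NormedSpace ℝ E]
    {M : Submodule ℝ E} (hM : IsClosed (M : Set E)) {c : ℝ → E} {c' : E} {a : ℝ}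
    (hc : HasDerivAt c c' a) (hcM : ∀ t, c t ∈ M) : c' ∈ M := by
  have h := range_deriv_subset_closure_span_image c dense_univ ⟨a, hc.deriv⟩
  refine closure_minimal ?_ hM h
  exact Submodule.span_le.2 (by rintro _ ⟨t, -, rfl⟩; exact hcM t)

/-- The window integral `y ↦ ∫ t in y..y + h, σ t`. -/
noncomputable def windowIntegral (σ : C(ℝ, ℝ)) (h : ℝ) : C(ℝ, ℝ) where
  toFun y := (∫ t in (0 : ℝ)..y + h, σ t) - ∫ t in (0 : ℝ)..y, σ t
  continuous_toFun := by
    have h1 : Continuous fun y : ℝ => ∫ t in (0 : ℝ)..y, σ t :=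
      intervalIntegral.continuous_primitive (fun a b => σ.continuous.intervalIntegrable a b) 0
    exact (h1.comp (continuous_id.add continuous_const)).sub h1

/-- The forward difference `y ↦ σ (y + h) - σ y`. -/
def forwardDiff (σ : C(ℝ, ℝ)) (h : ℝ) : C(ℝ, ℝ) where
  toFun y := σ (y + h) - σ y

theorem windowIntegral_eq (σ : C(ℝ, ℝ)) (h y : ℝ) :
    windowIntegral σ h y = ∫ t in (0 : ℝ)..h, σ (y + t) := by
  rw [intervalIntegral.integral_comp_add_left (fun t => σ t), add_zero]
  exact intervalIntegral.integral_interval_sub_left (σ.continuous.intervalIntegrable _ _)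
    (σ.continuous.intervalIntegrable _ _)

theorem hasDerivAt_windowIntegral (σ : C(ℝ, ℝ)) (h y : ℝ) :
    HasDerivAt (windowIntegral σ h) (forwardDiff σ h y) y := by
  have key : ∀ z : ℝ, HasDerivAt (fun y : ℝ => ∫ t in (0 : ℝ)..y, σ t) (σ z) z := fun z =>
    intervalIntegral.integral_hasDerivAt_right (σ.continuous.intervalIntegrable _ _)
      σ.continuous.stronglyMeasurable.stronglyMeasurableAtFilter σ.continuous.continuousAt
  exact ((key (y + h)).comp_add_const y h).sub (key y)

theorem windowIntegral_comp_affine_mem (ι : C(X, ℝ)) (σ : C(ℝ, ℝ)) (h a b : ℝ) :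
    (windowIntegral σ h).comp (a • ι + ContinuousMap.const X b) ∈ ridgeSpan ι σ := by
  have hc : Continuous fun t : ℝ => σ.comp (a • ι + ContinuousMap.const X (b + t)) :=
    (continuous_comp_affine ι σ).comp
      (continuous_const.prodMk (continuous_const.add continuous_id) :
        Continuous fun t : ℝ => (a, b + t))
  have hmem := intervalIntegral_mem_of_isClosed (isClosed_ridgeSpan ι σ) hc
    (fun t => comp_affine_mem_ridgeSpan ι σ a (b + t)) 0 h
  convert hmem using 1
  ext x
  rw [continuousMap_intervalIntegral_apply hc]
  simp [windowIntegral_eq, add_assoc]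

theorem mul_forwardDiff_comp_affine_mem (ι : C(X, ℝ)) (σ : C(ℝ, ℝ)) (h a b : ℝ) :
    ι * (forwardDiff σ h).comp (a • ι + ContinuousMap.const X b) ∈ ridgeSpan ι σ := by
  set c : ℝ → C(X, ℝ) := fun u => ι * (forwardDiff σ h).comp (u • ι + ContinuousMap.const X b)
  have hc : Continuous c := continuous_const.mul
    ((continuous_comp_affine ι (forwardDiff σ h)).comp
      (continuous_id.prodMk continuous_const : Continuous fun u : ℝ => (u, b)))
  set C₀ : C(X, ℝ) := (windowIntegral σ h).comp ((0 : ℝ) • ι + ContinuousMap.const X b)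
  have hint : ∀ u : ℝ, ∫ t in (0 : ℝ)..u, c t =
      (windowIntegral σ h).comp (u • ι + ContinuousMap.const X b) - C₀ := by
    intro u
    ext x
    rw [continuousMap_intervalIntegral_apply hc]
    have hd : ∀ t ∈ Set.uIcc 0 u,
        HasDerivAt (fun t : ℝ => windowIntegral σ h (t * ι x + b)) (c t x) t := by
      intro t _
      have h1 : HasDerivAt (fun t : ℝ => t * ι x + b) (ι x) t := by
        simpa using ((hasDerivAt_id t).mul_const (ι x)).add_const b
      have h2 := (hasDerivAt_windowIntegral σ h (t * ι x + b)).comp t h1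
      rw [mul_comm] at h2
      exact h2
    rw [intervalIntegral.integral_eq_sub_of_hasDerivAt hd
      (((ContinuousMap.evalCLM ℝ x).continuous.comp hc).intervalIntegrable _ _)]
    simp [C₀]
  have hderiv : HasDerivAt (fun u => ∫ t in (0 : ℝ)..u, c t) (c a) a :=
    intervalIntegral.integral_hasDerivAt_right (hc.intervalIntegrable _ _)
      hc.aestronglyMeasurable.stronglyMeasurableAtFilter hc.continuousAt
  refine hderiv.mem_of_isClosed (isClosed_ridgeSpan ι σ) fun u => ?_
  rw [hint]
  exact Submodule.sub_mem _ (windowIntegral_comp_affine_mem ι σ h u b)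
    (windowIntegral_comp_affine_mem ι σ h 0 b)

theorem mul_mem_ridgeSpan_of_mem_ridgeSpan_forwardDiff (ι : C(X, ℝ)) (σ : C(ℝ, ℝ)) (h : ℝ)
    {f : C(X, ℝ)} (hf : f ∈ ridgeSpan ι (forwardDiff σ h)) : ι * f ∈ ridgeSpan ι σ := by
  have hle : ridgeSpan ι (forwardDiff σ h) ≤
      (ridgeSpan ι σ).comap (LinearMap.mulLeft ℝ ι) := by
    refine Submodule.topologicalClosure_minimal _ (Submodule.span_le.2 ?_) ?_
    · rintro _ ⟨p, rfl⟩
      exact mul_forwardDiff_comp_affine_mem ι σ h p.1 p.2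
    · exact (isClosed_ridgeSpan ι σ).preimage (continuous_const.mul continuous_id)
  exact hle hf

end RidgeSpan

section Polynomial

open Polynomial

theorem exists_derivative_eq_of_mem_degreeLT {k : ℕ} {p : ℝ[X]} (hp : p ∈ degreeLT ℝ k) :
    ∃ q ∈ degreeLT ℝ (k + 1), derivative q = p := by
  rw [degreeLT_eq_span_X_pow] at hp
  induction hp using Submodule.span_induction with
  | mem x hx =>
    simp only [Finset.coe_image, Finset.coe_range, Set.mem_image, Set.mem_Iio] at hx
    obtain ⟨i, hi, rfl⟩ := hx
    refine ⟨C ((i + 1 : ℝ)⁻¹) * X ^ (i + 1), ?_, ?_⟩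
    · rw [mem_degreeLT]
      exact (degree_C_mul_X_pow_le _ _).trans_lt (by exact_mod_cast Nat.succ_lt_succ hi)
    · have : (i + 1 : ℝ) ≠ 0 := by positivity
      rw [derivative_C_mul_X_pow]
      simp [this, ← monomial_one_right_eq_X_pow]
  | zero => exact ⟨0, Submodule.zero_mem _, derivative_zero⟩
  | add x y _ _ hx hy =>
    obtain ⟨q, hq, rfl⟩ := hx
    obtain ⟨r, hr, rfl⟩ := hy
    exact ⟨q + r, Submodule.add_mem _ hq hr, derivative_add⟩
  | smul a x _ hx =>
    obtain ⟨q, hq, rfl⟩ := hx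
    exact ⟨a • q, Submodule.smul_mem _ a hq, derivative_smul a q⟩

theorem exists_eval_eq_intervalIntegral {k : ℕ} {f : ℝ → ℝ → ℝ}
    (hf : ∀ x, Continuous fun h => f h x)
    (hp : ∀ h, ∃ p ∈ degreeLT ℝ k, ∀ x, f h x = p.eval x) (u v : ℝ) :
    ∃ p ∈ degreeLT ℝ k, ∀ x, ∫ h in u..v, f h x = p.eval x := by
  have hinj : Set.InjOn (fun i : ℕ => (i : ℝ)) (Finset.range k : Set ℕ) :=
    Nat.cast_injective.injOn
  refine ⟨Lagrange.interpolate (Finset.range k) (fun i : ℕ => (i : ℝ))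
    (fun i => ∫ h in u..v, f h i), ?_, fun x => ?_⟩
  · rw [mem_degreeLT]
    simpa using Lagrange.degree_interpolate_lt (fun i : ℕ => ∫ h in u..v, f h i) hinj
  · have hfx : ∀ h, f h x = ∑ i ∈ Finset.range k,
        f h i * (Lagrange.basis (Finset.range k) (fun i : ℕ => (i : ℝ)) i).eval x := by
      intro h
      obtain ⟨p, hpk, hpe⟩ := hp h
      rw [mem_degreeLT] at hpk
      have := Lagrange.eq_interpolate hinj (f := p) (by simpa using hpk)
      rw [hpe x]
      conv_lhs => rw [this]
      simp [Lagrange.interpolate_apply, eval_finsetSum, hpe]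
    simp_rw [hfx]
    rw [intervalIntegral.integral_finsetSum fun i _ => Continuous.intervalIntegrable
      (by exact (hf i).mul continuous_const) _ _]
    simp [Lagrange.interpolate_apply, eval_finsetSum]

theorem exists_eval_eq_of_forwardDiff {k : ℕ} {σ : C(ℝ, ℝ)}
    (hσ : ∀ h, ∃ p ∈ degreeLT ℝ k, ∀ x, forwardDiff σ h x = p.eval x) :
    ∃ p ∈ degreeLT ℝ (k + 1), ∀ x, σ x = p.eval x := by
  obtain ⟨p, hp, hpe⟩ := exists_eval_eq_intervalIntegral (f := fun h x => forwardDiff σ h x)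
    (fun x => by simp only [forwardDiff, ContinuousMap.coe_mk]; fun_prop) hσ 0 1
  obtain ⟨q, hq, hqe⟩ := hσ 1
  obtain ⟨r, hr, rfl⟩ := exists_derivative_eq_of_mem_degreeLT hq
  have hconst : ∀ x, windowIntegral σ 1 x - r.eval x = windowIntegral σ 1 0 - r.eval 0 := by
    have hd : ∀ x, HasDerivAt (fun x => windowIntegral σ 1 x - r.eval x) 0 x := fun x => by
      have h := (hasDerivAt_windowIntegral σ 1 x).sub (r.hasDerivAt x)
      rw [hqe, sub_self] at h
      exact h
    exact fun x => is_const_of_deriv_eq_zero (fun x => (hd x).differentiableAt)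
      (fun x => (hd x).deriv) x 0
  refine ⟨r + C (windowIntegral σ 1 0 - r.eval 0) - p,
    Submodule.sub_mem _ (Submodule.add_mem _ hr ?_) (degreeLT_mono (Nat.le_succ k) hp),
    fun x => ?_⟩
  · rw [mem_degreeLT]
    exact degree_C_le.trans_lt (by exact_mod_cast Nat.succ_pos k)
  · have h1 : ∫ h in (0 : ℝ)..1, forwardDiff σ h x = windowIntegral σ 1 x - σ x := by
      rw [windowIntegral_eq]
      simp only [forwardDiff, ContinuousMap.coe_mk]
      rw [intervalIntegral.integral_sub
        ((by fun_prop : Continuous fun t => σ (x + t)).intervalIntegrable _ _)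
        (continuous_const.intervalIntegrable _ _)]
      simp
    have h2 := hpe x
    rw [h1] at h2
    simp only [eval_sub, eval_add, eval_C, ← h2, ← hconst x]
    ring

theorem exists_eval_eq_of_pow_notMem_ridgeSpan {X : Type*} [TopologicalSpace X] [CompactSpace X]
    (ι : C(X, ℝ)) (k : ℕ) (σ : C(ℝ, ℝ)) (hk : ι ^ k ∉ ridgeSpan ι σ) :
    ∃ p ∈ degreeLT ℝ k, ∀ x, σ x = p.eval x := by
  induction k generalizing σ with
  | zero =>
    refine ⟨0, Submodule.zero_mem _, fun b => ?_⟩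
    by_contra hb
    rw [eval_zero] at hb
    refine hk ?_
    convert Submodule.smul_mem _ (σ b)⁻¹ (comp_affine_mem_ridgeSpan ι σ 0 b) using 1
    ext x
    simp [hb]
  | succ k ih =>
    refine exists_eval_eq_of_forwardDiff fun h => ih _ fun hmem => hk ?_
    rw [pow_succ']
    exact mul_mem_ridgeSpan_of_mem_ridgeSpan_forwardDiff ι σ h hmem

theorem ridgeSpan_eq_top {a b : ℝ} {σ : C(ℝ, ℝ)} (hσ : NotPolynomial σ) :
    ridgeSpan (⟨Subtype.val, continuous_subtype_val⟩ : C(Set.Icc a b, ℝ)) σ = ⊤ := by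
  set ι : C(Set.Icc a b, ℝ) := ⟨Subtype.val, continuous_subtype_val⟩
  have hpow : ∀ k, ι ^ k ∈ ridgeSpan ι σ := fun k => by
    by_contra hk
    obtain ⟨p, -, hp⟩ := exists_eval_eq_of_pow_notMem_ridgeSpan ι k σ hk
    exact hσ ⟨p, hp⟩
  have hpoly : (polynomialFunctions (Set.Icc a b) : Set C(Set.Icc a b, ℝ)) ⊆
      ridgeSpan ι σ := by
    rintro _ ⟨p, -, rfl⟩
    have : (toContinuousMapOnAlgHom (Set.Icc a b)) p = ∑ i ∈ p.support, p.coeff i • ι ^ i := by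
      ext x
      simp [ι, eval_eq_sum, Polynomial.sum]
    simp only [RingHom.coe_coe, this, SetLike.mem_coe]
    exact Submodule.sum_mem _ fun i _ => Submodule.smul_mem _ _ (hpow i)
  rw [eq_top_iff]
  intro f _
  have hf : f ∈ (polynomialFunctions (Set.Icc a b)).topologicalClosure := by
    rw [polynomialFunctions_closure_eq_top]; trivial
  exact closure_minimal hpoly (isClosed_ridgeSpan ι σ) hf

end Polynomial

section DeepNetworks

/-- Scalar networks with inputs `ι`: affine functions of `ι` at depth `0`, and linear
combinations of activated networks of depth `c` at depth `c + 1`. -/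
def scalarNets {X : Type*} [TopologicalSpace X] (ι : C(X, ℝ)) (σ : C(ℝ, ℝ)) :
    ℕ → Set C(X, ℝ)
  | 0 => Set.range fun p : ℝ × ℝ => p.1 • ι + ContinuousMap.const X p.2
  | c + 1 => Submodule.span ℝ (Set.range fun s : scalarNets ι σ c => σ.comp s.1)

theorem dense_scalarNets_succ {a b : ℝ} {σ : C(ℝ, ℝ)} (hσ : NotPolynomial σ) (c : ℕ) :
    Dense (scalarNets (⟨Subtype.val, continuous_subtype_val⟩ : C(Set.Icc a b, ℝ)) σ (c + 1)) := by
  set ι : C(Set.Icc a b, ℝ) := ⟨Subtype.val, continuous_subtype_val⟩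
  have hspan : ∀ (S : Submodule ℝ C(Set.Icc a b, ℝ)),
      (∀ p : ℝ × ℝ, σ.comp (p.1 • ι + ContinuousMap.const _ p.2) ∈ S.topologicalClosure) →
      Dense (S : Set C(Set.Icc a b, ℝ)) := by
    intro S hS
    rw [Submodule.dense_iff_topologicalClosure_eq_top, eq_top_iff, ← ridgeSpan_eq_top hσ]
    refine Submodule.topologicalClosure_minimal _ (Submodule.span_le.2 ?_)
      S.isClosed_topologicalClosure
    rintro _ ⟨p, rfl⟩
    exact hS p
  induction c with
  | zero =>
    exact hspan _ fun p => Submodule.le_topologicalClosure _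
      (Submodule.subset_span ⟨⟨_, p, rfl⟩, rfl⟩)
  | succ c ih =>
    refine hspan _ fun p => ?_
    exact map_mem_closure (ContinuousMap.continuous_postcomp σ) (ih _)
      fun s hs => Submodule.subset_span ⟨⟨s, hs⟩, rfl⟩

theorem exists_common_expansion {E α : Type*} [AddCommGroup E] [Module ℝ E] (φ : α → E)
    {J : Type*} [Fintype J] (s : J → E) (hs : ∀ i, s i ∈ Submodule.span ℝ (Set.range φ)) :
    ∃ (m : ℕ) (t : Fin m → α) (w : J → Fin m → ℝ), ∀ i, s i = ∑ j, w i j • φ (t j) := by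
  classical
  choose w hw using fun i => Finsupp.mem_span_range_iff_exists_finsupp.1 (hs i)
  set U : Finset α := Finset.univ.biUnion fun i => (w i).support
  refine ⟨U.card, fun j => (U.equivFin.symm j : α), fun i j => w i (U.equivFin.symm j),
    fun i => ?_⟩
  rw [U.equivFin.symm.sum_comp (fun u : U => w i u • φ u),
    Finset.sum_coe_sort U (fun u => w i u • φ u), ← hw i]
  exact Finsupp.sum_of_support_subset _
    (Finset.subset_biUnion_of_mem (fun i => (w i).support) (Finset.mem_univ i)) _
    fun _ _ => zero_smul _ _

theorem exists_mem_WRepIn_of_mem_scalarNets {n : ℕ} {K : Set ℝ} (σ : C(ℝ, ℝ)) (c : ℕ) {k : ℕ}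
    (s : Fin k → C(K, ℝ))
    (hs : ∀ i, s i ∈ scalarNets ⟨Subtype.val, continuous_subtype_val⟩ σ c) :
    ∃ g ∈ WRepIn σ (ConvC n) c k, ∀ (v : Fin n → ℝ) (p : Fin k × Fin n) (hv : v p.2 ∈ K),
      g v p = s p.1 ⟨v p.2, hv⟩ := by
  induction c generalizing k with
  | zero =>
    choose q hq using hs
    refine ⟨fun v p => (q p.1).1 * v p.2 + (q p.1).2,
      ⟨fun i v z => (q i).1 * v z + (q i).2, fun i => ⟨_, _, rfl⟩, fun _ _ => rfl⟩,
      fun v p hv => ?_⟩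
    simp [← hq]
  | succ c ih =>
    obtain ⟨m, t, w, hw⟩ := exists_common_expansion _ s hs
    obtain ⟨g, hg, hgs⟩ := ih (fun j => (t j).1) fun j => (t j).2
    refine ⟨_, ⟨m, g, hg, fun u p => ∑ j, w p.1 j * u (j, p.2),
      ⟨fun i j u z => w i j * u z + 0, fun i j => ⟨_, _, rfl⟩, fun v p => by simp⟩, rfl⟩,
      fun v p hv => ?_⟩
    simp [hw, act, ContinuousMap.sum_apply, fun j => hgs v (j, p.2) hv]

theorem exists_pointwise_of_mem_layerPow {n k h : ℕ}
    {F : (Fin k × Fin n → ℝ) → (Fin h × Fin n → ℝ)} (hF : F ∈ layerPow (ConvC n) k h) :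
    ∃ f : Fin h → (Fin k → ℝ) → ℝ, (∀ i, Continuous (f i)) ∧
      ∀ v p, F v p = f p.1 fun j => v (j, p.2) := by
  obtain ⟨f, hf, hFf⟩ := hF
  choose a b hab using hf
  refine ⟨fun i u => ∑ j, (a i j * u j + b i j), fun i => by fun_prop, fun v p => ?_⟩
  simp [hFf, hab]

theorem exists_pointwise_of_mem_layerPowOut {n k : ℕ}
    {F : (Fin k × Fin n → ℝ) → (Fin n → ℝ)} (hF : F ∈ layerPowOut (ConvC n) k) :
    ∃ f : (Fin k → ℝ) → ℝ, Continuous f ∧ ∀ v z, F v z = f fun j => v (j, z) := by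
  obtain ⟨f, hf, hFf⟩ := hF
  choose a b hab using hf
  refine ⟨fun u => ∑ j, (a j * u j + b j), by fun_prop, fun v z => ?_⟩
  simp [hFf, hab]

theorem exists_pointwise_of_mem_WRepIn {n : ℕ} {σ : ℝ → ℝ} (hσ : Continuous σ) (c : ℕ) {k : ℕ}
    {g : (Fin n → ℝ) → (Fin k × Fin n → ℝ)} (hg : g ∈ WRepIn σ (ConvC n) c k) :
    ∃ f : Fin k → ℝ → ℝ, (∀ i, Continuous (f i)) ∧ ∀ v p, g v p = f p.1 (v p.2) := by
  induction c generalizing k with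
  | zero =>
    obtain ⟨f, hf, hgf⟩ := hg
    choose a b hab using hf
    exact ⟨fun i x => a i * x + b i, fun i => by fun_prop, fun v p => by simp [hgf, hab]⟩
  | succ c ih =>
    obtain ⟨k', g', hg', F, hF, rfl⟩ := hg
    obtain ⟨f, hf, hgf⟩ := ih hg'
    obtain ⟨e, he, hFe⟩ := exists_pointwise_of_mem_layerPow hF
    refine ⟨fun i x => e i fun j => σ (f j x), fun i => ?_, fun v p => by simp [hFe, act, hgf]⟩
    exact (he i).comp (continuous_pi fun j => hσ.comp (hf j))

theorem exists_pointwise_of_mem_unifClosure {n : ℕ} (hn : 1 ≤ n)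
    {S : Set ((Fin n → ℝ) → (Fin n → ℝ))}
    (hS : ∀ G ∈ S, ∃ f : ℝ → ℝ, Continuous f ∧ G = fun v i => f (v i))
    {F : (Fin n → ℝ) → (Fin n → ℝ)} (hF : F ∈ UnifClosure S) :
    ∃ f : ℝ → ℝ, Continuous f ∧ F = fun v i => f (v i) := by
  have hcoord : ∀ (v w : Fin n → ℝ) (i j : Fin n), v i = w j → F v i = F w j := by
    intro v w i j hij
    refine eq_of_forall_dist_le fun ε hε => ?_
    obtain ⟨G, hG, hFG⟩ := hF {v, w} (Set.toFinite _).isCompact (ε / 2) (half_pos hε)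
    obtain ⟨f, -, rfl⟩ := hS G hG
    have h1 := (dist_le_pi_dist _ _ i).trans_lt (hFG v (by simp))
    have h2 := (dist_le_pi_dist _ _ j).trans_lt (hFG w (by simp))
    simp only [hij] at h1 h2
    linarith [dist_triangle_right (F v i) (F w j) (f (w j))]
  set i₀ : Fin n := ⟨0, hn⟩
  refine ⟨fun x => F (fun _ => x) i₀, ?_, funext fun v => funext fun i =>
    hcoord _ _ _ _ rfl⟩
  refine continuous_iff_continuousAt.2 fun x₀ => ?_
  have hmem : Set.Icc (x₀ - 1) (x₀ + 1) ∈ nhds x₀ := Icc_mem_nhds (by simp) (by simp)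
  refine ContinuousOn.continuousAt (s := Set.Icc (x₀ - 1) (x₀ + 1)) ?_ hmem
  refine continuousOn_of_uniform_approx_of_continuousOn fun u hu => ?_
  obtain ⟨ε, hε, hεu⟩ := Metric.mem_uniformity_dist.1 hu
  obtain ⟨G, hG, hFG⟩ := hF ((fun x _ => x) '' Set.Icc (x₀ - 1) (x₀ + 1))
    (isCompact_Icc.image (by fun_prop)) ε hε
  obtain ⟨f, hf, rfl⟩ := hS G hG
  exact ⟨f, hf.continuousOn, fun y hy => hεu
    ((dist_le_pi_dist _ _ i₀).trans_lt (hFG _ (Set.mem_image_of_mem _ hy)))⟩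

theorem pointwise_mem_UClassRep {n : ℕ} {σ : ℝ → ℝ} (hσc : Continuous σ)
    (hσp : NotPolynomial σ) (c : ℕ) {f : ℝ → ℝ} (hf : Continuous f) :
    (fun (v : Fin n → ℝ) i => f (v i)) ∈ UClassRep σ (ConvC n) c := by
  intro K hK ε hε
  obtain ⟨R, hR⟩ := hK.isBounded.exists_norm_le
  have hmem : ∀ v ∈ K, ∀ i, v i ∈ Set.Icc (-R) R := fun v hv i =>
    abs_le.1 ((norm_le_pi_norm v i).trans (hR v hv))
  obtain ⟨s, hs, hfs⟩ := (dense_scalarNets_succ (a := -R) (b := R) (σ := ⟨σ, hσc⟩)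
    hσp c).exists_dist_lt (ContinuousMap.restrict (Set.Icc (-R) R) ⟨f, hf⟩) hε
  obtain ⟨m, t, w, hw⟩ := exists_common_expansion (J := Unit) _ (fun _ => s) fun _ => hs
  obtain ⟨g, hg, hgs⟩ :=
    exists_mem_WRepIn_of_mem_scalarNets (n := n) _ c (fun j => (t j).1) fun j => (t j).2
  refine ⟨_, ⟨m, g, hg, fun u z => ∑ j, w () j * u (j, z),
    ⟨fun j u z => w () j * u z + 0, fun j => ⟨_, _, rfl⟩, fun v z => by simp⟩, rfl⟩,
    fun v hv => (dist_pi_lt_iff hε).2 fun i => ?_⟩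
  have h := (ContinuousMap.dist_apply_le_dist (⟨v i, hmem v hv i⟩ : Set.Icc (-R) R)).trans_lt hfs
  rw [hw ()] at h
  simpa [act, ContinuousMap.sum_apply, fun j => hgs v (j, i) (hmem v hv i)] using h

end DeepNetworks

/-- Proposition `prop:univ-class-1conv`: for `d ≥ 2`, the universality
class of `d` copies of the width-1 convolutional layer space `C` on `ℝ^n` is exactly the
set of coordinatewise maps `(x₁,…,x_n) ↦ (f(x₁),…,f(x_n))` with `f` continuous, and for
`n ≥ 2` this is a proper subset of the continuous `S_n`-equivariant maps `ℝ^n → ℝ^n`.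
(`UClassRep σ (ConvC n) (d - 2)` is the universality class of `d` copies of `C`.) -/
theorem conv_universality_class_eq_pointwise
    (n : ℕ) (hn : 1 ≤ n) (σ : ℝ → ℝ) (hσc : Continuous σ) (hσp : NotPolynomial σ)
    (d : ℕ) (hd : 2 ≤ d) :
    (UClassRep σ (ConvC n) (d - 2)
      = { F : (Fin n → ℝ) → (Fin n → ℝ) |
          ∃ f : ℝ → ℝ, Continuous f ∧ F = fun v i => f (v i) }) ∧
    (2 ≤ n → UClassRep σ (ConvC n) (d - 2)
      ⊂ { F : (Fin n → ℝ) → (Fin n → ℝ) | Continuous F ∧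
          ∀ (g : Equiv.Perm (Fin n)) (v : Fin n → ℝ),
            F (fun i => v (g⁻¹ i)) = fun i => F v (g⁻¹ i) }) := by
  have hpt : UClassRep σ (ConvC n) (d - 2)
      = { F : (Fin n → ℝ) → (Fin n → ℝ) |
          ∃ f : ℝ → ℝ, Continuous f ∧ F = fun v i => f (v i) } := by
    refine Set.Subset.antisymm (fun F hF => ?_) ?_
    · refine exists_pointwise_of_mem_unifClosure hn ?_ hF
      rintro _ ⟨k, g, hg, F', hF', rfl⟩
      obtain ⟨f, hf, hgf⟩ := exists_pointwise_of_mem_WRepIn hσc _ hg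
      obtain ⟨e, he, hFe⟩ := exists_pointwise_of_mem_layerPowOut hF'
      refine ⟨fun x => e fun j => σ (f j x),
        he.comp (continuous_pi fun j => hσc.comp (hf j)), ?_⟩
      funext v i
      simp [hFe, act, hgf]
    · rintro _ ⟨f, hf, rfl⟩
      exact pointwise_mem_UClassRep hσc hσp _ hf
  refine ⟨hpt, fun hn2 => ?_⟩
  rw [hpt, Set.ssubset_iff_of_subset]
  · refine ⟨fun v _ => ∑ j, v j, ⟨by fun_prop, fun g v => ?_⟩, ?_⟩
    · funext i
      exact Equiv.sum_comp g⁻¹ v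
    · rintro ⟨f, -, hf⟩
      have h0 := congrFun (congrFun hf 0) ⟨0, hn⟩
      have h1 := congrFun (congrFun hf (Pi.single ⟨0, hn⟩ 1)) ⟨1, hn2⟩
      simp at h0 h1
      linarith
  · rintro _ ⟨f, hf, rfl⟩
    exact ⟨by fun_prop, fun _ _ => rfl⟩
end
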